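/- Suppose the seminorm N satisfies N(ν) ≤ Σ_{f∈F} d(f)|ν(f)| for every finite signed measure ν, where F is a countable family of measurable functions satisfying Assumption 1 and the d(f) are positive constants with Σ_{f∈F} d(f)‖f‖ < ∞. Suppose there is a constant b > 0 such that P[N(P_n − Q_n) ≤ b] → 0 as n → ∞. Then θ̂_n − θ = O_p(n^{−1}). -/

import Mathlib

open MeasureTheory Filter

/-- The integral `ν(f) = ∫ f dν` of a function against a finite signed measure,
via the Jordan decomposition. -/
noncomputable def sIntegral {E : Type*} [MeasurableSpace E] (ν : SignedMeasure E) (f : E → ℝ) : ℝ :=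
  ∫ x, f x ∂ν.toJordanDecomposition.posPart - ∫ x, f x ∂ν.toJordanDecomposition.negPart

/-- Covariance of two real random variables. -/
noncomputable def covar {Ω : Type*} [MeasurableSpace Ω] (μ : Measure Ω) (Y Z : Ω → ℝ) : ℝ :=
  ∫ ω, (Y ω - ∫ ω', Y ω' ∂μ) * (Z ω - ∫ ω', Z ω' ∂μ) ∂μ

/-- Variance of a real random variable. -/
noncomputable def variance' {Ω : Type*} [MeasurableSpace Ω] (μ : Measure Ω) (Y : Ω → ℝ) : ℝ :=
  covar μ Y Y

/-- `A_n = O_p(c_n)`: `lim_{M→∞} limsup_{n→∞} P(|A_n| > M c_n) = 0`. -/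
def IsOp {Ω : Type*} [MeasurableSpace Ω] (μ : Measure Ω) (A : ℕ → Ω → ℝ) (c : ℕ → ℝ) : Prop :=
  Tendsto (fun M : ℝ => Filter.limsup (fun n => μ {ω | M * c n < |A n ω|}) atTop)
    atTop (nhds 0)

/-!
Along a block of observations with a common law and polynomially decaying covariances, Chebyshev's
inequality along the subsequence `j ^ (a + 1)` gives `∑ d(f) |ν_l(f) - π(f)| ≤ ε`, simultaneously
for all lengths `l ≥ M` of the initial segments with empirical measures `ν_l`, outside an event
whose probability tends to `0` as `M → ∞`. On the complement, in both time directions from both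
ends and from the change point, the contrast `N (D_k)` is close to that of the two limit laws,
which is maximal at the change point `κ` and decreases linearly in `|k - κ| / n`. The error in the
contrast between `k` and `κ` is at most `ε |k - κ| / n` as soon as `|k - κ| ≥ M`, so no maximizer
is that far from `κ`.

The supremum defining `‖f‖` is `0` when it diverges, so the summability of `d(f) ‖f‖` leaves such
`f` unrestricted. They cannot contribute to the bound on `N`: unless `|f|` is at most a multiple of
`1 + ∑ d(h) |h|`, with `h` ranging over the other functions, there are arbitrarily small atomic
measures that integrate every `h` but not `f`, and adding them to both sides of a difference
`μ - ν` turns the term of `f` into the integral of a non-integrable function.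
-/

open scoped ENNReal NNReal

section SignedIntegral

variable {E : Type*} [MeasurableSpace E] {μ ν η₁ η₂ : Measure E} [IsFiniteMeasure μ]
  [IsFiniteMeasure ν] [IsFiniteMeasure η₁] [IsFiniteMeasure η₂] {f : E → ℝ}

theorem sIntegral_toSignedMeasure_sub (μ ν : Measure E) [IsFiniteMeasure μ] [IsFiniteMeasure ν]
    (f : E → ℝ) :
    sIntegral (μ.toSignedMeasure - ν.toSignedMeasure) f =
      ∫ x, f x ∂(μ - ν) - ∫ x, f x ∂(ν - μ) := by
  rw [sIntegral, Measure.toJordanDecomposition_toSignedMeasure_sub]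
  rfl

theorem sub_add_eq_sub_add_of_finite (μ ν : Measure E) [IsFiniteMeasure μ] [IsFiniteMeasure ν] :
    μ - ν + ν = ν - μ + μ := by
  have h := Measure.sub_toSignedMeasure_eq_toSignedMeasure_sub (μ := μ) (ν := ν)
  rw [sub_eq_sub_iff_add_eq_add, ← Measure.toSignedMeasure_add, ← Measure.toSignedMeasure_add,
    Measure.toSignedMeasure_eq_toSignedMeasure_iff] at h
  rw [add_comm (ν - μ), h]

theorem sIntegral_toSignedMeasure_sub_of_integrable (hμ : Integrable f μ) (hν : Integrable f ν) :
    sIntegral (μ.toSignedMeasure - ν.toSignedMeasure) f = ∫ x, f x ∂μ - ∫ x, f x ∂ν := by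
  have h := congrArg (fun m => ∫ x, f x ∂m) (sub_add_eq_sub_add_of_finite μ ν)
  simp only [integral_add_measure (hμ.mono_measure Measure.sub_le) hν,
    integral_add_measure (hν.mono_measure Measure.sub_le) hμ] at h
  rw [sIntegral_toSignedMeasure_sub]
  linarith

-- The Bochner integral of a non-integrable function is `0`.
theorem sIntegral_toSignedMeasure_sub_eq_zero (h₁ : ∫⁻ x, ‖f x‖ₑ ∂(μ - ν) = ∞)
    (h₂ : ∫⁻ x, ‖f x‖ₑ ∂(ν - μ) = ∞) :
    sIntegral (μ.toSignedMeasure - ν.toSignedMeasure) f = 0 := by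
  rw [sIntegral_toSignedMeasure_sub, integral_undef fun hf => hf.2.ne h₁,
    integral_undef fun hf => hf.2.ne h₂, sub_zero]

theorem enorm_sIntegral_add_smul_sub_le (hμ : Integrable f μ) (hν : Integrable f ν)
    (h₁ : Integrable f η₁) (h₂ : Integrable f η₂) (t : ℝ≥0) :
    ‖sIntegral ((μ + t • η₁).toSignedMeasure - (ν + t • η₂).toSignedMeasure) f‖ₑ ≤
      ‖∫ x, f x ∂μ - ∫ x, f x ∂ν‖ₑ + t * (∫⁻ x, ‖f x‖ₑ ∂η₁ + ∫⁻ x, ‖f x‖ₑ ∂η₂) := by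
  have h : sIntegral ((μ + t • η₁).toSignedMeasure - (ν + t • η₂).toSignedMeasure) f =
      (∫ x, f x ∂μ - ∫ x, f x ∂ν) + (t : ℝ) * (∫ x, f x ∂η₁ - ∫ x, f x ∂η₂) := by
    have h₁' : Integrable f (t • η₁) := h₁.smul_measure_nnreal
    have h₂' : Integrable f (t • η₂) := h₂.smul_measure_nnreal
    rw [sIntegral_toSignedMeasure_sub_of_integrable (hμ.add_measure h₁') (hν.add_measure h₂'),
      integral_add_measure hμ h₁', integral_add_measure hν h₂', integral_smul_nnreal_measure,
      integral_smul_nnreal_measure, NNReal.smul_def, NNReal.smul_def, smul_eq_mul, smul_eq_mul]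
    ring
  calc _ ≤ ‖∫ x, f x ∂μ - ∫ x, f x ∂ν‖ₑ + ‖(t : ℝ)‖ₑ * ‖∫ x, f x ∂η₁ - ∫ x, f x ∂η₂‖ₑ := by
        rw [h, ← enorm_mul]; exact enorm_add_le _ _
    _ ≤ _ := by
        gcongr
        · simp
        · exact enorm_sub_le.trans (add_le_add (enorm_integral_le_lintegral_enorm _)
            (enorm_integral_le_lintegral_enorm _))

theorem ofReal_seminorm_toSignedMeasure_sub_le (N : Seminorm ℝ (SignedMeasure E))
    (μ ν η₁ η₂ : Measure E) [IsFiniteMeasure μ] [IsFiniteMeasure ν] [IsFiniteMeasure η₁]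
    [IsFiniteMeasure η₂] (t : ℝ≥0) :
    ENNReal.ofReal (N (μ.toSignedMeasure - ν.toSignedMeasure)) ≤
      ENNReal.ofReal (N ((μ + t • η₁).toSignedMeasure - (ν + t • η₂).toSignedMeasure)) +
        t * ENNReal.ofReal (N (η₁.toSignedMeasure - η₂.toSignedMeasure)) := by
  have h : μ.toSignedMeasure - ν.toSignedMeasure =
      ((μ + t • η₁).toSignedMeasure - (ν + t • η₂).toSignedMeasure) -
        (t : ℝ) • (η₁.toSignedMeasure - η₂.toSignedMeasure) := by
    rw [Measure.toSignedMeasure_add, Measure.toSignedMeasure_add, Measure.toSignedMeasure_smul,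
      Measure.toSignedMeasure_smul, NNReal.smul_def, NNReal.smul_def]
    module
  rw [← ENNReal.ofReal_coe_nnreal, ← ENNReal.ofReal_mul t.coe_nonneg,
    ← ENNReal.ofReal_add (apply_nonneg N _) (by positivity), h]
  refine ENNReal.ofReal_le_ofReal ((map_sub_le_add N _ _).trans_eq ?_)
  rw [map_smul_eq_mul, Real.norm_of_nonneg t.coe_nonneg]

end SignedIntegral

section Control

/-- The envelope `∑ c i |g i|` of a weighted family of functions. -/
noncomputable def envelope {E ι : Type*} (c : ι → ℝ≥0∞) (g : ι → E → ℝ) (x : E) : ℝ≥0∞ :=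
  ∑' i, c i * ‖g i x‖ₑ

variable {E : Type*} [MeasurableSpace E] {ι : Type*}

/-- On differences of finite measures with integrable envelope, the seminorm `N` is at most the
weighted sum of the differences of the integrals of the family. Unlike the bound of `N` by
`sIntegral`, all these integrals converge. -/
def IsControlledBy (N : Seminorm ℝ (SignedMeasure E)) (c : ι → ℝ≥0∞) (g : ι → E → ℝ) : Prop :=
  ∀ (μ ν : Measure E) [IsFiniteMeasure μ] [IsFiniteMeasure ν],
    ∫⁻ x, envelope c g x ∂μ ≠ ∞ → ∫⁻ x, envelope c g x ∂ν ≠ ∞ →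
      ENNReal.ofReal (N (μ.toSignedMeasure - ν.toSignedMeasure)) ≤
        ∑' i, c i * ‖∫ x, g i x ∂μ - ∫ x, g i x ∂ν‖ₑ

variable {c : ι → ℝ≥0∞} {f g : ι → E → ℝ} {μ ν η₁ η₂ : Measure E}

theorem measurable_envelope [Countable ι] (c : ι → ℝ≥0∞) (hg : ∀ i, Measurable (g i)) :
    Measurable (envelope c g) :=
  Measurable.tsum fun i => (hg i).enorm.const_mul _

theorem lintegral_envelope [Countable ι] (c : ι → ℝ≥0∞) (hg : ∀ i, Measurable (g i))
    (μ : Measure E) : ∫⁻ x, envelope c g x ∂μ = ∑' i, c i * ∫⁻ x, ‖g i x‖ₑ ∂μ := by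
  simp_rw [envelope, lintegral_tsum fun i => ((hg i).enorm.const_mul (c i)).aemeasurable,
    lintegral_const_mul _ (hg _).enorm]

theorem integrable_of_lintegral_envelope_ne_top (hc : ∀ i, c i ≠ 0) (hg : ∀ i, Measurable (g i))
    (hμ : ∫⁻ x, envelope c g x ∂μ ≠ ∞) (i : ι) : Integrable (g i) μ := by
  refine ⟨(hg i).aestronglyMeasurable, lt_top_iff_ne_top.2 fun h => hμ (top_unique ?_)⟩
  calc ∞ = c i * ∫⁻ x, ‖g i x‖ₑ ∂μ := by rw [h, ENNReal.mul_top (hc i)]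
    _ = ∫⁻ x, c i * ‖g i x‖ₑ ∂μ := (lintegral_const_mul _ (hg i).enorm).symm
    _ ≤ ∫⁻ x, envelope c g x ∂μ :=
      lintegral_mono fun x => ENNReal.le_tsum (f := fun i => c i * ‖g i x‖ₑ) i

theorem le_of_forall_pos_le_add_mul {x y z : ℝ≥0∞} (hz : z ≠ ∞)
    (h : ∀ t : ℝ≥0, 0 < t → x ≤ y + t * z) : x ≤ y := by
  refine ENNReal.le_of_forall_pos_le_add fun ε hε _ => ?_
  lift z to ℝ≥0 using hz
  refine (h (ε / (z + 1)) (by positivity)).trans ?_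
  gcongr
  norm_cast
  rw [div_mul_eq_mul_div, div_le_iff₀ (by positivity)]
  exact mul_le_mul_of_nonneg_left (by simp) ε.2

theorem ofReal_seminorm_sub_le_of_perturbation [Countable ι] {N : Seminorm ℝ (SignedMeasure E)}
    [IsFiniteMeasure μ] [IsFiniteMeasure ν] [IsFiniteMeasure η₁] [IsFiniteMeasure η₂]
    (hc : ∀ i, c i ≠ 0)
    (hN : ∀ ν : SignedMeasure E, ENNReal.ofReal (N ν) ≤ ∑' i, c i * ‖sIntegral ν (f i)‖ₑ)
    (hg : ∀ i, Measurable (g i))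
    (hμ : ∫⁻ x, envelope c g x ∂μ ≠ ∞) (hν : ∫⁻ x, envelope c g x ∂ν ≠ ∞)
    (hη₁ : ∫⁻ x, envelope c g x ∂η₁ ≠ ∞) (hη₂ : ∫⁻ x, envelope c g x ∂η₂ ≠ ∞)
    (h : ∀ i, g i = f i ∨ ∀ t : ℝ≥0, 0 < t →
      sIntegral ((μ + t • η₁).toSignedMeasure - (ν + t • η₂).toSignedMeasure) (f i) = 0) :
    ENNReal.ofReal (N (μ.toSignedMeasure - ν.toSignedMeasure)) ≤
      ∑' i, c i * ‖∫ x, g i x ∂μ - ∫ x, g i x ∂ν‖ₑ := by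
  set B := ∫⁻ x, envelope c g x ∂η₁ + ∫⁻ x, envelope c g x ∂η₂
  set R := ENNReal.ofReal (N (η₁.toSignedMeasure - η₂.toSignedMeasure))
  refine le_of_forall_pos_le_add_mul (z := B + R)
    (ENNReal.add_ne_top.2 ⟨ENNReal.add_ne_top.2 ⟨hη₁, hη₂⟩, ENNReal.ofReal_ne_top⟩) fun t ht => ?_
  set A := (μ + t • η₁).toSignedMeasure - (ν + t • η₂).toSignedMeasure
  have hterm : ∀ i, ‖sIntegral A (f i)‖ₑ ≤ ‖∫ x, g i x ∂μ - ∫ x, g i x ∂ν‖ₑ +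
      t * (∫⁻ x, ‖g i x‖ₑ ∂η₁ + ∫⁻ x, ‖g i x‖ₑ ∂η₂) := fun i => by
    rcases h i with hi | hi
    · have hint {m : Measure E} (hm : ∫⁻ x, envelope c g x ∂m ≠ ∞) :=
        integrable_of_lintegral_envelope_ne_top hc hg hm i
      rw [← hi]
      exact enorm_sIntegral_add_smul_sub_le (hint hμ) (hint hν) (hint hη₁) (hint hη₂) t
    · rw [hi t ht, enorm_zero]; exact zero_le
  have hA : ENNReal.ofReal (N A) ≤ ∑' i, c i * ‖∫ x, g i x ∂μ - ∫ x, g i x ∂ν‖ₑ + t * B :=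
    calc ENNReal.ofReal (N A)
        ≤ ∑' i, c i * (‖∫ x, g i x ∂μ - ∫ x, g i x ∂ν‖ₑ +
            t * (∫⁻ x, ‖g i x‖ₑ ∂η₁ + ∫⁻ x, ‖g i x‖ₑ ∂η₂)) :=
          (hN A).trans (ENNReal.tsum_le_tsum fun i => by gcongr; exact hterm i)
      _ = _ := by
          simp_rw [B, lintegral_envelope c hg, mul_add, ENNReal.tsum_add,
            mul_left_comm _ (t : ℝ≥0∞), ENNReal.tsum_mul_left]
  calc _ ≤ ENNReal.ofReal (N A) + t * R := ofReal_seminorm_toSignedMeasure_sub_le N μ ν η₁ η₂ t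
    _ ≤ _ := by rw [mul_add, ← add_assoc]; gcongr

end Control

section SparseSequence

theorem exists_seq_of_forall_finset {α : Type*} (p : ℕ → α → Prop) (r : α → α → Prop)
    (h : ∀ (n : ℕ) (s : Finset α), ∃ y, p n y ∧ ∀ x ∈ s, r x y) :
    ∃ x : ℕ → α, (∀ n, p n (x n)) ∧ ∀ m n, m < n → r (x m) (x n) := by
  classical
  choose φ hp hr using h
  let S : ℕ → Finset α := fun n => Nat.rec ∅ (fun k s => insert (φ k s) s) n
  have hS : ∀ n, S (n + 1) = insert (φ n (S n)) (S n) := fun n => rfl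
  refine ⟨fun n => φ n (S n), fun n => hp _ _, fun m n hmn => hr _ _ _ ?_⟩
  induction n, hmn using Nat.le_induction with
  | base => simp [hS]
  | succ k _ ih => rw [hS]; exact Finset.mem_insert_of_mem ih

theorem exists_seq_infinite_fibers (α : Type*) [Countable α] [Nonempty α] :
    ∃ e : ℕ → α, ∀ a, {n | e n = a}.Infinite := by
  obtain ⟨e, he⟩ := exists_surjective_nat α
  refine ⟨fun n => e n.unpair.1, fun a => ?_⟩
  obtain ⟨k, rfl⟩ := he a
  refine Set.infinite_of_injective_forall_mem (f := Nat.pair k) (fun m n h => ?_) fun m => by simp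
  simpa using congrArg (fun n => n.unpair.2) h

variable {E κ : Type*} {f : κ → E → ℝ} {G : E → ℝ≥0∞}

/-- The joint level set through `x` of `G` and all the `|f i|`. -/
def levelCell (f : κ → E → ℝ) (G : E → ℝ≥0∞) (x : E) : Set E :=
  {y | G y = G x ∧ ∀ i, ‖f i y‖ₑ = ‖f i x‖ₑ}

theorem disjoint_levelCell {x y : E} (h : x ∉ levelCell f G y) :
    Disjoint (levelCell f G y) (levelCell f G x) :=
  Set.disjoint_left.2 fun _ hy hx =>
    h ⟨hx.1.symm.trans hy.1, fun i => (hx.2 i).symm.trans (hy.2 i)⟩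

theorem exists_seq_disjoint_levelCell (hunbdd : ∀ (i : κ) (R : ℝ≥0), ∃ x, R * (1 + G x) < ‖f i x‖ₑ)
    (e : ℕ → κ) (R : ℕ → ℝ≥0) : ∃ x : ℕ → E, (∀ n, R n * (1 + G (x n)) < ‖f (e n) (x n)‖ₑ) ∧
      Pairwise (Function.onFun Disjoint fun n => levelCell f G (x n)) := by
  have hnext : ∀ (n : ℕ) (s : Finset E), ∃ y, R n * (1 + G y) < ‖f (e n) y‖ₑ ∧
      ∀ x ∈ s, y ∉ levelCell f G x := by
    intro n s
    obtain ⟨y, hy⟩ := hunbdd (e n) (R n + ∑ x ∈ s, ‖f (e n) x‖₊)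
    refine ⟨y, hy.trans_le' (by gcongr; simp), fun x hx hxy => hy.not_ge ?_⟩
    calc ‖f (e n) y‖ₑ = ‖f (e n) x‖ₑ := hxy.2 (e n)
      _ ≤ (R n + ∑ x ∈ s, ‖f (e n) x‖₊ : ℝ≥0) :=
        ENNReal.coe_le_coe.2 ((Finset.single_le_sum (f := fun x => ‖f (e n) x‖₊)
          (fun _ _ => zero_le) hx).trans le_add_self)
      _ ≤ _ := le_mul_of_one_le_right' le_self_add
  obtain ⟨x, hx, hcell⟩ := exists_seq_of_forall_finset
    (fun n y => R n * (1 + G y) < ‖f (e n) y‖ₑ) (fun x y => y ∉ levelCell f G x) hnext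
  exact ⟨x, hx, (pairwise_disjoint_on _).2 fun m n hmn => disjoint_levelCell (hcell m n hmn)⟩

variable [MeasurableSpace E]

theorem exists_setLIntegral_lt_le {μ : Measure E} [IsFiniteMeasure μ] {G u : E → ℝ≥0∞}
    (hu : Measurable u) (hu_top : ∀ x, u x ≠ ∞) (hG : ∫⁻ x, G x ∂μ ≠ ∞) {ε : ℝ≥0∞}
    (hε : ε ≠ 0) : ∃ R : ℝ≥0, ∫⁻ x in {x | (R : ℝ≥0∞) < u x}, G x ∂μ ≤ ε := by
  have hempty : (⋂ n : ℕ, {x | (n : ℝ≥0∞) < u x}) = ∅ := by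
    refine Set.eq_empty_of_forall_notMem fun x hx => ?_
    obtain ⟨n, hn⟩ := ENNReal.exists_nat_gt (hu_top x)
    exact (Set.mem_iInter.1 hx n).not_ge hn.le
  have hmeas : Tendsto (fun n : ℕ => μ {x | (n : ℝ≥0∞) < u x}) atTop (nhds 0) := by
    rw [← measure_empty (μ := μ), ← hempty]
    refine tendsto_measure_iInter_atTop
      (fun n => (measurableSet_lt measurable_const hu).nullMeasurableSet)
      (fun m n hmn x (hx : (n : ℝ≥0∞) < u x) => lt_of_le_of_lt (by exact_mod_cast hmn) hx)
      ⟨0, measure_ne_top _ _⟩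
  obtain ⟨n, hn⟩ := ((tendsto_setLIntegral_zero hG hmeas).eventually
    (ge_mem_nhds (pos_iff_ne_zero.2 hε))).exists
  exact ⟨n, by exact_mod_cast hn⟩

theorem lintegral_sub_eq_top {μ ν : Measure E} [IsFiniteMeasure μ] [IsFiniteMeasure ν]
    {h : E → ℝ≥0∞} {s : ℕ → Set E}
    (hs : ∀ n, MeasurableSet (s n)) (hdisj : Pairwise (Function.onFun Disjoint s))
    {a w : ℕ → ℝ≥0∞} {t : ℝ≥0} (ht : 0 < t) {I : Set ℕ} (hI : I.Infinite)
    (hμ : ∀ n ∈ I, t * w n ≤ μ (s n)) (hν : ∀ n ∈ I, ν (s n) ≤ 2⁻¹ ^ n * w n)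
    (hw : ∀ n, w n ≠ ∞) (haw : ∀ n ∈ I, 1 ≤ a n * w n) (ha : ∀ n ∈ I, ∀ x ∈ s n, a n ≤ h x) :
    ∫⁻ x, h x ∂(μ - ν) = ∞ := by
  have ht2 : (t / 2 : ℝ≥0∞) ≠ 0 := (ENNReal.half_pos (by simpa using ht.ne')).ne'
  obtain ⟨n₀, hn₀⟩ := eventually_atTop.1 <| (ENNReal.tendsto_pow_atTop_nhds_zero_of_lt_one
    (r := 2⁻¹) (by simp)).eventually (ge_mem_nhds (pos_iff_ne_zero.2 ht2))
  have hcell : ∀ n ∈ I, n₀ ≤ n → (t / 2 : ℝ≥0∞) ≤ ∫⁻ x in s n, h x ∂(μ - ν) := by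
    intro n hn hnn₀
    have hle : (t / 2 : ℝ≥0∞) * w n ≤ (μ - ν) (s n) := by
      refine (ENNReal.add_le_add_iff_right (a := t / 2 * w n) (by finiteness [hw n])).1 ?_
      calc (t / 2 : ℝ≥0∞) * w n + t / 2 * w n = t * w n := by rw [← add_mul, ENNReal.add_halves]
        _ ≤ μ (s n) := hμ n hn
        _ ≤ (μ - ν + ν) (s n) := Measure.le_iff'.1 (Measure.sub_le_iff_le_add.1 le_rfl) _
        _ ≤ (μ - ν) (s n) + t / 2 * w n := by
          rw [Measure.add_apply]
          gcongr
          exact (hν n hn).trans (by gcongr; exact hn₀ n hnn₀)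
    calc (t / 2 : ℝ≥0∞) ≤ t / 2 * (a n * w n) := le_mul_of_one_le_right' (haw n hn)
      _ = a n * (t / 2 * w n) := by ring
      _ ≤ a n * (μ - ν) (s n) := by gcongr
      _ = ∫⁻ _ in s n, a n ∂(μ - ν) := (setLIntegral_const _ _).symm
      _ ≤ ∫⁻ x in s n, h x ∂(μ - ν) := setLIntegral_mono' (hs n) (ha n hn)
  by_contra hfin
  have hsum : ∑' n, ∫⁻ x in s n, h x ∂(μ - ν) ≠ ∞ := by
    rw [← lintegral_iUnion hs hdisj]
    exact ne_top_of_le_ne_top hfin (setLIntegral_le_lintegral _ _)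
  refine (hI.sdiff (Set.finite_lt_nat n₀)) ((ENNReal.finite_const_le_of_tsum_ne_top hsum ht2).subset
    fun n hn => hcell n hn.1 (not_lt.1 hn.2))

theorem measurableSet_levelCell [Countable κ] (hf : ∀ i, Measurable (f i)) (hG : Measurable G)
    (x : E) : MeasurableSet (levelCell f G x) := by
  rw [levelCell, Set.ofPred_and, Set.ofPred_forall]
  exact (hG (measurableSet_singleton _)).inter
    (MeasurableSet.iInter fun i => (hf i).enorm (measurableSet_singleton _))

/-- Points with disjoint cells along which `f (e n)` is much larger than `G`, while the cells
carry little mass of the measure `τ`. -/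
structure IsSparseSeq (τ : Measure E) (f : κ → E → ℝ) (G : E → ℝ≥0∞) (e : ℕ → κ)
    (x : ℕ → E) : Prop where
  disjoint : Pairwise (Function.onFun Disjoint fun n => levelCell f G (x n))
  lt_enorm : ∀ n, 2 ^ n * (1 + G (x n)) < ‖f (e n) (x n)‖ₑ
  measure_mul_le : ∀ n, τ (levelCell f G (x n)) * (1 + G (x n)) ≤ 4⁻¹ ^ n

theorem exists_isSparseSeq [Countable κ] (hf : ∀ i, Measurable (f i)) (hG : Measurable G)
    (hunbdd : ∀ (i : κ) (R : ℝ≥0), ∃ x, R * (1 + G x) < ‖f i x‖ₑ) (τ : Measure E)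
    [IsFiniteMeasure τ] (hτ : ∫⁻ x, G x ∂τ ≠ ∞) (e : ℕ → κ) :
    ∃ x, IsSparseSeq τ f G e x := by
  have hτ1 : ∫⁻ x, 1 + G x ∂τ ≠ ∞ := by
    rw [lintegral_add_left measurable_const, lintegral_one]
    exact ENNReal.add_ne_top.2 ⟨measure_ne_top _ _, hτ⟩
  choose R hR using fun n => exists_setLIntegral_lt_le
    (u := fun x => ‖f (e n) x‖ₑ) (hf (e n)).enorm (fun _ => enorm_ne_top) hτ1
    (ε := 4⁻¹ ^ n) (by simp)
  obtain ⟨x, hx, hdisj⟩ := exists_seq_disjoint_levelCell hunbdd e fun n => 2 ^ n + R n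
  refine ⟨x, hdisj, fun n => (hx n).trans_le' (by gcongr; simp), fun n => ?_⟩
  have hmeas := measurableSet_levelCell hf hG (x n)
  have hRx : (R n : ℝ≥0∞) < ‖f (e n) (x n)‖ₑ := (hx n).trans_le' <| by
    push_cast
    exact le_add_self.trans (le_mul_of_one_le_right' le_self_add)
  calc τ (levelCell f G (x n)) * (1 + G (x n))
      = ∫⁻ y in levelCell f G (x n), 1 + G y ∂τ := by
        rw [setLIntegral_congr_fun hmeas fun y hy => by rw [hy.1], setLIntegral_const, mul_comm]
    _ ≤ ∫⁻ y in {y | (R n : ℝ≥0∞) < ‖f (e n) y‖ₑ}, 1 + G y ∂τ :=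
        lintegral_mono_set fun y hy => hRx.trans_eq (hy.2 (e n)).symm
    _ ≤ 4⁻¹ ^ n := hR n

end SparseSequence

section Perturbation

variable {E κ : Type*} [MeasurableSpace E] {f : κ → E → ℝ} {G : E → ℝ≥0∞} {τ : Measure E}
  {e : ℕ → κ × Bool} {x : ℕ → E}

/-- The weight of the `n`-th point: small enough that the weighted points integrate `1 + G`. -/
noncomputable def atomWeight (G : E → ℝ≥0∞) (x : ℕ → E) (n : ℕ) : ℝ≥0∞ :=
  2⁻¹ ^ n / (1 + G (x n))

/-- The weighted point masses at those points `x n` whose index is assigned to the side `q`. -/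
noncomputable def atomicMeasure (G : E → ℝ≥0∞) (x : ℕ → E) (e : ℕ → κ × Bool) (q : Bool) :
    Measure E :=
  Measure.sum fun n : {n // (e n).2 = q} => atomWeight G x n • Measure.dirac (x n)

theorem lintegral_atomicMeasure_ne_top (x : ℕ → E) (e : ℕ → κ × Bool) (q : Bool) {h : E → ℝ≥0∞}
    (hh : Measurable h) (hhG : ∀ y, h y ≤ 1 + G y) : ∫⁻ y, h y ∂(atomicMeasure G x e q) ≠ ∞ := by
  simp only [atomicMeasure, lintegral_sum_measure, lintegral_smul_measure, lintegral_dirac' _ hh,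
    smul_eq_mul]
  refine ne_top_of_le_ne_top (b := ∑' n : ℕ, (2⁻¹ : ℝ≥0∞) ^ n) (by simp [ENNReal.tsum_geometric]) ?_
  refine le_trans (ENNReal.tsum_le_tsum fun n => ?_)
    (ENNReal.tsum_comp_le_tsum_of_injective (f := ((↑) : {n // (e n).2 = q} → ℕ))
      Subtype.val_injective _)
  calc atomWeight G x n * h (x n) ≤ 2⁻¹ ^ (n : ℕ) / (1 + G (x n)) * (1 + G (x n)) := by
        rw [atomWeight]; gcongr; exact hhG _
    _ ≤ 2⁻¹ ^ (n : ℕ) := by rw [mul_comm]; exact ENNReal.mul_div_le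

theorem isFiniteMeasure_atomicMeasure (G : E → ℝ≥0∞) (x : ℕ → E) (e : ℕ → κ × Bool) (q : Bool) :
    IsFiniteMeasure (atomicMeasure G x e q) := by
  refine ⟨lt_top_iff_ne_top.2 ?_⟩
  rw [← lintegral_one]
  exact lintegral_atomicMeasure_ne_top x e q measurable_const fun _ => le_self_add

theorem atomWeight_le_atomicMeasure (G : E → ℝ≥0∞) (x : ℕ → E) {q : Bool} {n : ℕ}
    (hn : (e n).2 = q) {s : Set E} (hs : MeasurableSet s) (hxs : x n ∈ s) :
    atomWeight G x n ≤ atomicMeasure G x e q s := by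
  rw [atomicMeasure, Measure.sum_apply _ hs]
  refine le_trans (le_of_eq ?_) (ENNReal.le_tsum (⟨n, hn⟩ : {n // (e n).2 = q}))
  simp [hs, hxs]

namespace IsSparseSeq

theorem atomicMeasure_levelCell_eq_zero [Countable κ] (hf : ∀ i, Measurable (f i))
    (hG : Measurable G) (h : IsSparseSeq τ f G (fun n => (e n).1) x) {q : Bool} {n : ℕ}
    (hn : (e n).2 ≠ q) : atomicMeasure G x e q (levelCell f G (x n)) = 0 := by
  have hmeas := measurableSet_levelCell hf hG (x n)
  rw [atomicMeasure, Measure.sum_apply _ hmeas, ENNReal.tsum_eq_zero]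
  rintro ⟨m, hm⟩
  have hmn : m ≠ n := by rintro rfl; exact hn hm
  have hxm : x m ∉ levelCell f G (x n) :=
    Set.disjoint_left.1 (h.disjoint hmn) ⟨rfl, fun _ => rfl⟩
  simp [hmeas, hxm]

theorem ne_top (h : IsSparseSeq τ f G (fun n => (e n).1) x) (n : ℕ) : 1 + G (x n) ≠ ∞ :=
  fun htop => by simpa [htop] using h.lt_enorm n

theorem one_le_mul_atomWeight (h : IsSparseSeq τ f G (fun n => (e n).1) x) (n : ℕ) :
    1 ≤ ‖f (e n).1 (x n)‖ₑ * atomWeight G x n := by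
  calc (1 : ℝ≥0∞) = 2 ^ n * (1 + G (x n)) * atomWeight G x n := by
        rw [atomWeight, mul_assoc, ENNReal.mul_div_cancel (by simp) (h.ne_top n), ← mul_pow,
          ENNReal.mul_inv_cancel two_ne_zero ENNReal.ofNat_ne_top, one_pow]
    _ ≤ _ := by gcongr; exact (h.lt_enorm n).le

theorem measure_levelCell_le (h : IsSparseSeq τ f G (fun n => (e n).1) x) (n : ℕ) :
    τ (levelCell f G (x n)) ≤ 2⁻¹ ^ n * atomWeight G x n := by
  rw [atomWeight, ← mul_div_assoc, ← mul_pow, ← ENNReal.mul_inv (by simp) (by simp),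
    ENNReal.le_div_iff_mul_le (by simp) (.inl (h.ne_top n))]
  norm_num
  exact h.measure_mul_le n

theorem lintegral_sub_eq_top [Countable κ] (hf : ∀ i, Measurable (f i)) (hG : Measurable G)
    (h : IsSparseSeq τ f G (fun n => (e n).1) x) {i : κ} {q : Bool}
    (hi : {n | e n = (i, q)}.Infinite) {t : ℝ≥0} (ht : 0 < t) (μ ν : Measure E)
    [IsFiniteMeasure μ] [IsFiniteMeasure ν] (hν : ν ≤ τ) :
    ∫⁻ y, ‖f i y‖ₑ ∂(μ + t • atomicMeasure G x e q - (ν + t • atomicMeasure G x e !q)) = ∞ := by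
  have hmeas n := measurableSet_levelCell hf hG (x n)
  have hfin := isFiniteMeasure_atomicMeasure G x e
  refine _root_.lintegral_sub_eq_top hmeas h.disjoint (a := fun n => ‖f (e n).1 (x n)‖ₑ)
    (w := atomWeight G x) ht hi ?_ ?_ (fun n => ?_) (fun n _ => h.one_le_mul_atomWeight n) ?_
  · intro n hn
    rw [Measure.add_apply, Measure.smul_apply, ENNReal.smul_def, smul_eq_mul]
    refine le_add_left (mul_le_mul_right ?_ _)
    exact atomWeight_le_atomicMeasure G x (congrArg Prod.snd hn) (hmeas n) ⟨rfl, fun _ => rfl⟩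
  · intro n hn
    have hq : (e n).2 ≠ !q := by rw [congrArg Prod.snd hn]; simp
    rw [Measure.add_apply, Measure.smul_apply, h.atomicMeasure_levelCell_eq_zero hf hG hq,
      smul_zero, add_zero]
    exact (hν _).trans (h.measure_levelCell_le n)
  · exact ENNReal.div_ne_top (by simp) (by simp)
  · rintro n hn y hy
    obtain rfl : (e n).1 = i := congrArg Prod.fst hn
    exact (hy.2 _).ge

end IsSparseSeq

theorem exists_perturbing_measures [Countable κ] [Nonempty κ] (hf : ∀ i, Measurable (f i))
    (hG : Measurable G) (hunbdd : ∀ (i : κ) (R : ℝ≥0), ∃ x, R * (1 + G x) < ‖f i x‖ₑ)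
    (μ ν : Measure E) [IsFiniteMeasure μ] [IsFiniteMeasure ν] (hμ : ∫⁻ x, G x ∂μ ≠ ∞)
    (hν : ∫⁻ x, G x ∂ν ≠ ∞) :
    ∃ (η₁ η₂ : Measure E) (_ : IsFiniteMeasure η₁) (_ : IsFiniteMeasure η₂),
      ∫⁻ x, G x ∂η₁ ≠ ∞ ∧ ∫⁻ x, G x ∂η₂ ≠ ∞ ∧ ∀ (i : κ) (t : ℝ≥0), 0 < t →
        sIntegral ((μ + t • η₁).toSignedMeasure - (ν + t • η₂).toSignedMeasure) (f i) = 0 := by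
  obtain ⟨e, he⟩ := exists_seq_infinite_fibers (κ × Bool)
  obtain ⟨x, hx⟩ := exists_isSparseSeq hf hG hunbdd (μ + ν)
    (by rw [lintegral_add_measure]; exact ENNReal.add_ne_top.2 ⟨hμ, hν⟩) fun n => (e n).1
  have hint q := lintegral_atomicMeasure_ne_top (G := G) x e q hG fun _ => le_add_self
  have hfin := isFiniteMeasure_atomicMeasure G x e
  refine ⟨atomicMeasure G x e true, atomicMeasure G x e false, hfin _, hfin _, hint _, hint _,
    fun i t ht => sIntegral_toSignedMeasure_sub_eq_zero ?_ ?_⟩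
  · exact hx.lintegral_sub_eq_top hf hG (he (i, true)) ht μ ν (Measure.le_add_left le_rfl)
  · exact hx.lintegral_sub_eq_top hf hG (he (i, false)) ht ν μ (Measure.le_add_right le_rfl)

end Perturbation

section Elimination

variable {E ι : Type*} [MeasurableSpace E] [Countable ι]

/- A discarded `f i` is not controlled by the envelope, so it can be made non-integrable against
both Jordan parts by an arbitrarily small perturbation: it then drops out of the bound on `N`. -/
theorem IsControlledBy.of_unbounded {N : Seminorm ℝ (SignedMeasure E)} {c : ι → ℝ≥0∞}
    (hc : ∀ i, c i ≠ 0) {f g : ι → E → ℝ}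
    (hN : ∀ ν : SignedMeasure E, ENNReal.ofReal (N ν) ≤ ∑' i, c i * ‖sIntegral ν (f i)‖ₑ)
    (hf : ∀ i, Measurable (f i)) (hg : ∀ i, Measurable (g i))
    (hfg : ∀ i, g i = f i ∨ ∀ R : ℝ≥0, ∃ x, R * (1 + envelope c g x) < ‖f i x‖ₑ) :
    IsControlledBy N c g := by
  intro μ ν _ _ hμ hν
  by_cases hall : ∀ i, g i = f i
  · exact ofReal_seminorm_sub_le_of_perturbation (η₁ := 0) (η₂ := 0) hc hN hg hμ hν (by simp)
      (by simp) fun i => .inl (hall i)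
  obtain ⟨i₀, hi₀⟩ := not_forall.1 hall
  have : Nonempty {i // g i ≠ f i} := ⟨⟨i₀, hi₀⟩⟩
  obtain ⟨η₁, η₂, _, _, hη₁, hη₂, hzero⟩ := exists_perturbing_measures
    (f := fun i : {i // g i ≠ f i} => f i) (fun i => hf i) (measurable_envelope c hg)
    (fun i => (hfg i).resolve_left i.2) μ ν hμ hν
  refine ofReal_seminorm_sub_le_of_perturbation hc hN hg hμ hν hη₁ hη₂ fun i => ?_
  exact or_iff_not_imp_left.2 fun hi => hzero ⟨i, hi⟩

end Elimination

section SecondMoment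

variable {α ι : Type*} {mα : MeasurableSpace α} {μ : Measure α}

theorem lintegral_enorm_sq_eq {Y : α → ℝ} (h : MemLp Y 2 μ) :
    ∫⁻ x, ‖Y x‖ₑ ^ 2 ∂μ = ENNReal.ofReal (∫ x, Y x ^ 2 ∂μ) := by
  simp_rw [ofReal_integral_eq_lintegral_ofReal h.integrable_sq (ae_of_all _ fun _ => sq_nonneg _),
    ← ofReal_norm, ← ENNReal.ofReal_pow (norm_nonneg _), Real.norm_eq_abs, sq_abs]

theorem memLp_two_of_lintegral_enorm_sq_ne_top {Y : α → ℝ} (hY : AEStronglyMeasurable Y μ)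
    (h : ∫⁻ x, ‖Y x‖ₑ ^ 2 ∂μ ≠ ∞) : MemLp Y 2 μ := by
  refine ⟨hY, ?_⟩
  rw [eLpNorm_lt_top_iff_lintegral_rpow_enorm_lt_top (by norm_num) (by norm_num)]
  simpa using h.lt_top

theorem integral_sq_le_of_lintegral_enorm_sq_le {Y : α → ℝ} (hY : AEStronglyMeasurable Y μ)
    {σ : ℝ≥0} (h : ∫⁻ x, ‖Y x‖ₑ ^ 2 ∂μ ≤ (σ : ℝ≥0∞) ^ 2) : ∫ x, Y x ^ 2 ∂μ ≤ (σ : ℝ) ^ 2 := by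
  rwa [lintegral_enorm_sq_eq (memLp_two_of_lintegral_enorm_sq_ne_top hY
      (h.trans_lt (by finiteness)).ne), ← ENNReal.ofReal_coe_nnreal,
    ← ENNReal.ofReal_pow σ.coe_nonneg, ENNReal.ofReal_le_ofReal_iff (sq_nonneg _)] at h

theorem measure_lt_le_of_lintegral_sq_le {u : α → ℝ≥0∞} (hu : AEMeasurable u μ) {B t : ℝ≥0∞}
    (h : ∫⁻ x, u x ^ 2 ∂μ ≤ B) (ht0 : t ≠ 0) (ht : t ≠ ∞) : μ {x | t < u x} ≤ B / t ^ 2 :=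
  (measure_mono fun x (hx : t < u x) => pow_le_pow_left' hx.le 2).trans
    ((meas_ge_le_lintegral_div (hu.pow_const 2) (pow_ne_zero 2 ht0) (ENNReal.pow_ne_top ht)).trans
      (ENNReal.div_le_div_right h _))

theorem lintegral_tsum_sq_le [Countable ι] {u : ι → α → ℝ≥0∞} (hu : ∀ i, AEMeasurable (u i) μ)
    {c : ι → ℝ≥0∞} (h : ∀ i, ∫⁻ x, u i x ^ 2 ∂μ ≤ c i ^ 2) :
    ∫⁻ x, (∑' i, u i x) ^ 2 ∂μ ≤ (∑' i, c i) ^ 2 := by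
  have hL2 : ∀ i, (∫⁻ x, u i x ^ (2 : ℝ) ∂μ) ^ (1 / (2 : ℝ)) ≤ c i := fun i => by
    rw [one_div, ENNReal.rpow_inv_le_iff two_pos]
    simpa only [ENNReal.rpow_two] using h i
  have hm : ∀ i j, AEMeasurable (fun x => u j x * u i x) μ := fun i j => (hu j).mul (hu i)
  simp_rw [sq, ← ENNReal.tsum_mul_left, ← ENNReal.tsum_mul_right]
  rw [lintegral_tsum fun i => AEMeasurable.tsum fun j => hm _ _]
  refine ENNReal.tsum_le_tsum fun i => ?_
  rw [lintegral_tsum fun j => hm _ _]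
  exact ENNReal.tsum_le_tsum fun j =>
    (ENNReal.lintegral_mul_le_Lp_mul_Lq μ Real.HolderConjugate.two_two (hu j) (hu i)).trans
      (mul_le_mul' (hL2 j) (hL2 i))

theorem lintegral_tsum_mul_sq_le [Countable ι] (c : ι → ℝ≥0∞) {u : ι → α → ℝ≥0∞}
    (hu : ∀ i, AEMeasurable (u i) μ) {σ : ι → ℝ≥0∞} (h : ∀ i, ∫⁻ x, u i x ^ 2 ∂μ ≤ σ i ^ 2) :
    ∫⁻ x, (∑' i, c i * u i x) ^ 2 ∂μ ≤ (∑' i, c i * σ i) ^ 2 := by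
  refine lintegral_tsum_sq_le (fun i => (hu i).const_mul _) fun i => ?_
  simp_rw [mul_pow]
  rw [lintegral_const_mul'' _ ((hu i).pow_const 2)]
  gcongr
  exact h i

theorem lintegral_finset_sum_sq_le (s : Finset ι) {u : ι → α → ℝ≥0∞}
    (hu : ∀ i ∈ s, AEMeasurable (u i) μ) {c : ι → ℝ≥0∞}
    (h : ∀ i ∈ s, ∫⁻ x, u i x ^ 2 ∂μ ≤ c i ^ 2) :
    ∫⁻ x, (∑ i ∈ s, u i x) ^ 2 ∂μ ≤ (∑ i ∈ s, c i) ^ 2 := by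
  have key := lintegral_tsum_sq_le (ι := s) (u := fun i => u i) (c := fun i => c i)
    (fun i => hu i i.2) fun i => h i i.2
  have hsum : ∀ x, ∑' i : s, u i x = ∑ i ∈ s, u i x := fun x => s.tsum_subtype fun i => u i x
  simpa only [hsum, s.tsum_subtype c] using key

end SecondMoment

section RegularPart

variable {E κ : Type*} [MeasurableSpace E] {π : κ → Measure E} {m R : ℝ≥0}

theorem le_one_add_sq (x : ℝ≥0∞) : x ≤ 1 + x ^ 2 := by
  rcases le_total x 1 with h | h
  · exact h.trans le_self_add
  · exact (le_self_pow₀ h two_ne_zero).trans le_add_self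

theorem add_sq_le_two_mul (x y : ℝ≥0∞) : (x + y) ^ 2 ≤ 2 * (x ^ 2 + y ^ 2) := by
  have h := ENNReal.rpow_add_le_mul_rpow_add_rpow x y (p := 2) (by norm_num)
  norm_num at h
  exact h

theorem lintegral_ne_top_of_lintegral_sq_ne_top {α : Type*} {mα : MeasurableSpace α}
    {μ : Measure α} [IsFiniteMeasure μ] {u : α → ℝ≥0∞} (h : ∫⁻ x, u x ^ 2 ∂μ ≠ ∞) :
    ∫⁻ x, u x ∂μ ≠ ∞ := by
  refine ne_top_of_le_ne_top ?_ (lintegral_mono fun x => le_one_add_sq (u x))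
  rw [lintegral_add_left measurable_const, lintegral_const, one_mul]
  exact ENNReal.add_ne_top.2 ⟨measure_ne_top μ _, h⟩

/-- Finiteness of the norm `sup_n π_n(f²)^{1/2}`. A real-valued supremum of Bochner integrals
cannot express it, since it takes the value `0` when it diverges. -/
def HasBoundedSecondMoments (π : κ → Measure E) (f : E → ℝ) : Prop :=
  ∃ K : ℝ≥0, ∀ n, ∫⁻ x, ‖f x‖ₑ ^ 2 ∂π n ≤ K

open scoped Classical in
/-- The function `f` when its second moments are bounded, and `0` otherwise. -/
noncomputable def regularPart (π : κ → Measure E) (f : E → ℝ) : E → ℝ :=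
  if HasBoundedSecondMoments π f then f else 0

theorem regularPart_eq_self {f : E → ℝ} (h : HasBoundedSecondMoments π f) :
    regularPart π f = f :=
  if_pos h

theorem regularPart_eq_zero {f : E → ℝ} (h : ¬ HasBoundedSecondMoments π f) :
    regularPart π f = 0 :=
  if_neg h

theorem measurable_regularPart (π : κ → Measure E) {f : E → ℝ} (hf : Measurable f) :
    Measurable (regularPart π f) := by
  by_cases h : HasBoundedSecondMoments π f
  · rwa [regularPart_eq_self h]
  · rw [regularPart_eq_zero h]; exact measurable_const

theorem hasBoundedSecondMoments_of_enorm_le {f : E → ℝ} {G : E → ℝ≥0∞} (hG : Measurable G)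
    {K : ℝ≥0∞} (hK : K ≠ ∞) (hGK : ∀ n, ∫⁻ x, G x ^ 2 ∂π n ≤ K) (hm : ∀ n, π n Set.univ ≤ m)
    (h : ∀ x, ‖f x‖ₑ ≤ R * (1 + G x)) : HasBoundedSecondMoments π f := by
  have hfin : (R : ℝ≥0∞) ^ 2 * (2 * (m + K)) ≠ ∞ := by finiteness
  refine ⟨((R : ℝ≥0∞) ^ 2 * (2 * (m + K))).toNNReal, fun n => ?_⟩
  calc ∫⁻ x, ‖f x‖ₑ ^ 2 ∂π n ≤ ∫⁻ x, (R : ℝ≥0∞) ^ 2 * (2 * (1 + G x ^ 2)) ∂π n := by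
        refine lintegral_mono fun x => (pow_le_pow_left' (h x) 2).trans ?_
        rw [mul_pow]
        gcongr
        simpa using add_sq_le_two_mul 1 (G x)
    _ = (R : ℝ≥0∞) ^ 2 * (2 * (π n Set.univ + ∫⁻ x, G x ^ 2 ∂π n)) := by
        rw [lintegral_const_mul _ (by fun_prop), lintegral_const_mul _ (by fun_prop),
          lintegral_add_left measurable_const, lintegral_const, one_mul]
    _ ≤ (R : ℝ≥0∞) ^ 2 * (2 * (m + K)) := by gcongr <;> [exact hm n; exact hGK n]
    _ = _ := (ENNReal.coe_toNNReal hfin).symm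

theorem lintegral_enorm_sq_le_iSup_sqrt {P Q : ℕ → Measure E} {f : E → ℝ} (hf : Measurable f)
    (h : HasBoundedSecondMoments (fun n => P n + Q n) f) (n : ℕ) :
    ∫⁻ x, ‖f x‖ₑ ^ 2 ∂(P n + Q n) ≤
      ENNReal.ofReal (⨆ k, Real.sqrt (∫ x, f x ^ 2 ∂P k + ∫ x, f x ^ 2 ∂Q k)) ^ 2 := by
  obtain ⟨K, hK⟩ := h
  have hL : ∀ k, MemLp f 2 (P k + Q k) := fun k =>
    memLp_two_of_lintegral_enorm_sq_ne_top hf.aestronglyMeasurable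
      ((hK k).trans_lt ENNReal.coe_lt_top).ne
  have hsum : ∀ k, ∫ x, f x ^ 2 ∂P k + ∫ x, f x ^ 2 ∂Q k = ∫ x, f x ^ 2 ∂(P k + Q k) := fun k =>
    (integral_add_measure (hL k).integrable_sq.left_of_add_measure
      (hL k).integrable_sq.right_of_add_measure).symm
  have hbdd : BddAbove (Set.range fun k => Real.sqrt (∫ x, f x ^ 2 ∂(P k + Q k))) := by
    refine ⟨Real.sqrt K, Set.forall_mem_range.2 fun k => Real.sqrt_le_sqrt ?_⟩
    have hk := hK k
    rwa [lintegral_enorm_sq_eq (hL k), ENNReal.ofReal_le_coe] at hk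
  simp_rw [hsum]
  have hnonneg : 0 ≤ ⨆ k, Real.sqrt (∫ x, f x ^ 2 ∂(P k + Q k)) :=
    Real.iSup_nonneg fun k => Real.sqrt_nonneg _
  rw [lintegral_enorm_sq_eq (hL n), ← ENNReal.ofReal_pow hnonneg]
  exact ENNReal.ofReal_le_ofReal ((Real.sqrt_le_left hnonneg).1 (le_ciSup hbdd n))

variable {ι : Type*} {c : ι → ℝ≥0∞} {σ : ι → ℝ≥0} {f g : ι → E → ℝ} {μ : Measure E}

theorem lintegral_regularPart_sq_le
    (hσ : ∀ i, HasBoundedSecondMoments π (f i) →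
      ∀ n, ∫⁻ x, ‖f i x‖ₑ ^ 2 ∂π n ≤ (σ i : ℝ≥0∞) ^ 2) (i : ι) (n : κ) :
    ∫⁻ x, ‖regularPart π (f i) x‖ₑ ^ 2 ∂π n ≤ (σ i : ℝ≥0∞) ^ 2 := by
  by_cases h : HasBoundedSecondMoments π (f i)
  · rw [regularPart_eq_self h]; exact hσ i h n
  · simp [regularPart_eq_zero h]

variable [Countable ι]

theorem lintegral_envelope_sq_le (c : ι → ℝ≥0∞) (hg : ∀ i, Measurable (g i))
    (hμ : ∀ i, ∫⁻ x, ‖g i x‖ₑ ^ 2 ∂μ ≤ (σ i : ℝ≥0∞) ^ 2) :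
    ∫⁻ x, envelope c g x ^ 2 ∂μ ≤ (∑' i, c i * σ i) ^ 2 :=
  lintegral_tsum_mul_sq_le c (fun i => (hg i).enorm.aemeasurable) hμ

theorem lintegral_envelope_ne_top [IsFiniteMeasure μ] (hcσ : ∑' i, c i * σ i ≠ ∞)
    (hg : ∀ i, Measurable (g i)) (hμ : ∀ i, ∫⁻ x, ‖g i x‖ₑ ^ 2 ∂μ ≤ (σ i : ℝ≥0∞) ^ 2) :
    ∫⁻ x, envelope c g x ∂μ ≠ ∞ :=
  lintegral_ne_top_of_lintegral_sq_ne_top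
    ((lintegral_envelope_sq_le c hg hμ).trans_lt (ENNReal.pow_lt_top hcσ.lt_top)).ne

theorem isControlledBy_regularPart {N : Seminorm ℝ (SignedMeasure E)} (hc : ∀ i, c i ≠ 0)
    (hN : ∀ ν, ENNReal.ofReal (N ν) ≤ ∑' i, c i * ‖sIntegral ν (f i)‖ₑ)
    (hf : ∀ i, Measurable (f i)) (hm : ∀ n, π n Set.univ ≤ m) (hcσ : ∑' i, c i * σ i ≠ ∞)
    (hσ : ∀ i, HasBoundedSecondMoments π (f i) →
      ∀ n, ∫⁻ x, ‖f i x‖ₑ ^ 2 ∂π n ≤ (σ i : ℝ≥0∞) ^ 2) :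
    IsControlledBy N c fun i => regularPart π (f i) := by
  have hg : ∀ i, Measurable (regularPart π (f i)) := fun i => measurable_regularPart π (hf i)
  refine IsControlledBy.of_unbounded hc hN hf hg fun i => ?_
  by_cases h : HasBoundedSecondMoments π (f i)
  · exact Or.inl (regularPart_eq_self h)
  · refine Or.inr fun R => ?_
    by_contra! hR
    exact h (hasBoundedSecondMoments_of_enorm_le (measurable_envelope c hg)
      (ENNReal.pow_ne_top hcσ)
      (fun n => lintegral_envelope_sq_le c hg fun j => lintegral_regularPart_sq_le hσ j n) hm hR)

end RegularPart

section DecayingCovariance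

theorem sum_range_rpow_neg_le {s : ℝ} (hs0 : 0 ≤ s) (hs1 : s < 1) (l : ℕ) :
    ∑ m ∈ Finset.range l, ((m + 1 : ℕ) : ℝ) ^ (-s) ≤ (l : ℝ) ^ (1 - s) / (1 - s) := by
  have hs : 0 < 1 - s := by linarith
  induction l with
  | zero => simpa using by positivity
  | succ l ih =>
    rw [Finset.sum_range_succ]
    refine (add_le_add_left ih _).trans ?_
    have hl : (0 : ℝ) < (l + 1 : ℕ) := by positivity
    have hratio : (l : ℝ) / (l + 1 : ℕ) = 1 + -1 / (l + 1 : ℕ) := by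
      field_simp; push_cast; ring
    have hbernoulli : ((l : ℝ) / (l + 1 : ℕ)) ^ (1 - s) ≤ 1 - (1 - s) / (l + 1 : ℕ) := by
      rw [hratio]
      refine (rpow_one_add_le_one_add_mul_self ?_ hs.le (by linarith)).trans_eq (by ring)
      rw [le_div_iff₀ hl]; push_cast; linarith [(Nat.cast_nonneg l : (0 : ℝ) ≤ l)]
    have hsucc : ((l + 1 : ℕ) : ℝ) ^ (1 - s) = (l + 1 : ℕ) * ((l + 1 : ℕ) : ℝ) ^ (-s) := by
      rw [sub_eq_add_neg, Real.rpow_add hl, Real.rpow_one]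
    have hexpand : (1 - (1 - s) / ((l + 1 : ℕ) : ℝ)) * ((l + 1 : ℕ) : ℝ) ^ (1 - s) =
        ((l + 1 : ℕ) : ℝ) ^ (1 - s) - (1 - s) * ((l + 1 : ℕ) : ℝ) ^ (-s) := by
      rw [sub_mul, one_mul, div_mul_eq_mul_div, hsucc]
      field_simp
    rw [Real.div_rpow (by positivity) hl.le, div_le_iff₀ (by positivity), hexpand] at hbernoulli
    rw [le_div_iff₀ hs, add_mul, div_mul_cancel₀ _ hs.ne']
    linarith

variable {Ω : Type*} [MeasurableSpace Ω] {ℙ : Measure Ω} {C s v : ℝ} {Y : ℕ → Ω → ℝ} {l L : ℕ}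

theorem integral_sum_range_succ_sq (hY : ∀ j ≤ l, MemLp (Y j) 2 ℙ) :
    ∫ ω, (∑ j ∈ Finset.range (l + 1), Y j ω) ^ 2 ∂ℙ =
      ∫ ω, (∑ j ∈ Finset.range l, Y j ω) ^ 2 ∂ℙ +
        2 * ∑ j ∈ Finset.range l, ∫ ω, Y j ω * Y l ω ∂ℙ + ∫ ω, Y l ω ^ 2 ∂ℙ := by
  have hlt : ∀ j ∈ Finset.range l, MemLp (Y j) 2 ℙ := fun j hj => hY j (Finset.mem_range.1 hj).le
  have hsum : MemLp (fun ω => ∑ j ∈ Finset.range l, Y j ω) 2 ℙ := memLp_finsetSum _ hlt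
  have hmul : ∀ j ∈ Finset.range l, Integrable (fun ω => Y j ω * Y l ω) ℙ := fun j hj =>
    (hlt j hj).integrable_mul (hY l le_rfl)
  have hcross : Integrable (fun ω => 2 * ∑ j ∈ Finset.range l, Y j ω * Y l ω) ℙ :=
    (integrable_finsetSum _ hmul).const_mul 2
  have hsq : Integrable (fun ω => (∑ j ∈ Finset.range l, Y j ω) ^ 2 +
      2 * ∑ j ∈ Finset.range l, Y j ω * Y l ω) ℙ := hsum.integrable_sq.add hcross
  rw [← integral_finsetSum _ hmul, ← integral_const_mul, ← integral_add hsum.integrable_sq hcross,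
    ← integral_add hsq (hY l le_rfl).integrable_sq]
  refine integral_congr_ae (ae_of_all _ fun ω => ?_)
  simp only [Finset.sum_range_succ, ← Finset.sum_mul]
  ring

theorem sum_integral_mul_le_of_decay (hC : 0 ≤ C) (hs0 : 0 ≤ s) (hs1 : s < 1) (hv : 0 ≤ v)
    (hcov : ∀ j m, j + (m + 1) = l →
      ∫ ω, Y j ω * Y l ω ∂ℙ ≤ C * ((m + 1 : ℕ) : ℝ) ^ (-s) * v) :
    ∑ j ∈ Finset.range l, ∫ ω, Y j ω * Y l ω ∂ℙ ≤ C * v * ((l : ℝ) ^ (1 - s) / (1 - s)) :=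
  calc ∑ j ∈ Finset.range l, ∫ ω, Y j ω * Y l ω ∂ℙ
      ≤ ∑ j ∈ Finset.range l, C * v * ((l - 1 - j + 1 : ℕ) : ℝ) ^ (-s) := by
        refine Finset.sum_le_sum fun j hj => (hcov j (l - 1 - j) ?_).trans_eq (by ring)
        have := Finset.mem_range.1 hj
        omega
    _ = C * v * ∑ m ∈ Finset.range l, ((m + 1 : ℕ) : ℝ) ^ (-s) := by
        rw [← Finset.mul_sum, Finset.sum_range_reflect (fun m => ((m + 1 : ℕ) : ℝ) ^ (-s)) l]
    _ ≤ _ := mul_le_mul_of_nonneg_left (sum_range_rpow_neg_le hs0 hs1 l) (by positivity)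

theorem integral_sum_sq_le_of_decay (hC : 0 ≤ C) (hs0 : 0 ≤ s) (hs1 : s < 1) (hv : 0 ≤ v)
    (hY : ∀ j < L, MemLp (Y j) 2 ℙ) (hvar : ∀ j < L, ∫ ω, Y j ω ^ 2 ∂ℙ ≤ v)
    (hcov : ∀ j m, j + (m + 1) < L →
      ∫ ω, Y j ω * Y (j + (m + 1)) ω ∂ℙ ≤ C * ((m + 1 : ℕ) : ℝ) ^ (-s) * v) (hl : l ≤ L) :
    ∫ ω, (∑ j ∈ Finset.range l, Y j ω) ^ 2 ∂ℙ ≤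
      v * ((1 + 2 * C / (1 - s)) * (l * (l : ℝ) ^ (1 - s))) := by
  have hs : 0 < 1 - s := by linarith
  induction l with
  | zero => simp
  | succ l ih =>
    have hcross := sum_integral_mul_le_of_decay (l := l) hC hs0 hs1 hv fun j m hjm => by
      subst hjm
      exact hcov j m hl
    rw [integral_sum_range_succ_sq fun j hj => hY j (hj.trans_lt hl)]
    set D := 1 + 2 * C / (1 - s) with hD
    set r := ((l + 1 : ℕ) : ℝ) ^ (1 - s)
    have : 0 ≤ D := by positivity
    have hr : (l : ℝ) ^ (1 - s) ≤ r :=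
      Real.rpow_le_rpow (by positivity) (by push_cast; linarith) hs.le
    have hr1 : 1 ≤ r :=
      Real.one_le_rpow (by push_cast; linarith [(Nat.cast_nonneg l : (0 : ℝ) ≤ l)]) hs.le
    calc ∫ ω, (∑ j ∈ Finset.range l, Y j ω) ^ 2 ∂ℙ +
          2 * ∑ j ∈ Finset.range l, ∫ ω, Y j ω * Y l ω ∂ℙ + ∫ ω, Y l ω ^ 2 ∂ℙ
        ≤ v * (D * (l * (l : ℝ) ^ (1 - s))) +
            2 * (C * v * ((l : ℝ) ^ (1 - s) / (1 - s))) + v := by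
          gcongr
          exacts [ih (Nat.le_of_succ_le hl), hvar l hl]
      _ ≤ v * (D * (l * r)) + 2 * (C * v * (r / (1 - s))) + v * r := by
          gcongr
          exact le_mul_of_one_le_right hv hr1
      _ = v * (D * ((l + 1 : ℕ) * r)) := by rw [hD]; push_cast; ring

end DecayingCovariance

section MaximalEnvelope

variable {Ω ι : Type*}

/-- A majorant of the envelopes of all partial sums of the rows `W i` with between `a` and `b`
terms: the envelope of the sums of `a` terms, plus the envelopes of the next `b - a` terms. -/
noncomputable def maximalEnvelope (c : ι → ℝ≥0∞) (W : ι → ℕ → Ω → ℝ) (a b : ℕ) (ω : Ω) : ℝ≥0∞ :=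
  envelope c (fun i ω => ∑ j ∈ Finset.range a, W i j ω) ω +
    ∑ j ∈ Finset.Ico a b, envelope c (fun i => W i j) ω

theorem envelope_sum_range_le_maximalEnvelope (c : ι → ℝ≥0∞) (W : ι → ℕ → Ω → ℝ) {a b l : ℕ}
    (hal : a ≤ l) (hlb : l ≤ b) (ω : Ω) :
    envelope c (fun i ω => ∑ j ∈ Finset.range l, W i j ω) ω ≤ maximalEnvelope c W a b ω := by
  simp_rw [maximalEnvelope, envelope]
  rw [← Summable.tsum_finsetSum fun _ _ => ENNReal.summable, ← ENNReal.tsum_add]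
  refine ENNReal.tsum_le_tsum fun i => ?_
  rw [← Finset.mul_sum, ← mul_add, ← Finset.sum_range_add_sum_Ico _ hal]
  gcongr
  refine (enorm_add_le _ _).trans (add_le_add_right ((enorm_sum_le _ _).trans ?_) _)
  exact Finset.sum_le_sum_of_subset (Finset.Ico_subset_Ico_right hlb)

variable [MeasurableSpace Ω]

/-- Rows `W i` of random variables, of which the first `L` have second moments at most `σ i ^ 2`
and mixed moments bounded by `C * m ^ (-s) * σ i ^ 2` at distance `m`. -/
structure HasDecayingCovariance (ℙ : Measure Ω) (σ : ι → ℝ≥0) (C s : ℝ) (L : ℕ)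
    (W : ι → ℕ → Ω → ℝ) : Prop where
  measurable : ∀ i j, Measurable (W i j)
  lintegral_sq_le : ∀ i, ∀ j < L, ∫⁻ ω, ‖W i j ω‖ₑ ^ 2 ∂ℙ ≤ (σ i : ℝ≥0∞) ^ 2
  integral_mul_le : ∀ i j m, j + (m + 1) < L →
    ∫ ω, W i j ω * W i (j + (m + 1)) ω ∂ℙ ≤ C * ((m + 1 : ℕ) : ℝ) ^ (-s) * (σ i : ℝ) ^ 2

variable {ℙ : Measure Ω} {σ : ι → ℝ≥0} {C s : ℝ} {a b l L : ℕ} {W : ι → ℕ → Ω → ℝ}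

namespace HasDecayingCovariance

theorem lintegral_sum_sq_le (h : HasDecayingCovariance ℙ σ C s L W) (hC : 0 ≤ C) (hs0 : 0 ≤ s)
    (hs1 : s < 1) (hl : l ≤ L) (i : ι) :
    ∫⁻ ω, ‖∑ j ∈ Finset.range l, W i j ω‖ₑ ^ 2 ∂ℙ ≤
      (σ i : ℝ≥0∞) ^ 2 * ENNReal.ofReal ((1 + 2 * C / (1 - s)) * (l * (l : ℝ) ^ (1 - s))) := by
  have hm : ∀ j, AEStronglyMeasurable (W i j) ℙ := fun j => (h.measurable i j).aestronglyMeasurable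
  have hL2 : ∀ j < L, MemLp (W i j) 2 ℙ := fun j hj =>
    memLp_two_of_lintegral_enorm_sq_ne_top (hm j)
      ((h.lintegral_sq_le i j hj).trans_lt (by finiteness)).ne
  rw [lintegral_enorm_sq_eq (memLp_finsetSum _ fun j hj =>
    hL2 j ((Finset.mem_range.1 hj).trans_le hl))]
  refine (ENNReal.ofReal_le_ofReal (integral_sum_sq_le_of_decay hC hs0 hs1 (sq_nonneg (σ i : ℝ)) hL2
    (fun j hj => integral_sq_le_of_lintegral_enorm_sq_le (hm j) (h.lintegral_sq_le i j hj))
    (h.integral_mul_le i) hl)).trans_eq ?_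
  rw [ENNReal.ofReal_mul (sq_nonneg _), ENNReal.ofReal_pow (σ i).coe_nonneg,
    ENNReal.ofReal_coe_nnreal]

variable [Countable ι]

theorem measurable_maximalEnvelope (h : HasDecayingCovariance ℙ σ C s L W) (c : ι → ℝ≥0∞)
    (a b : ℕ) : Measurable (maximalEnvelope c W a b) :=
  (measurable_envelope c fun i => Finset.measurable_fun_sum _ fun j _ => h.measurable i j).add
    (Finset.measurable_fun_sum _ fun j _ => measurable_envelope c fun i => h.measurable i j)

theorem lintegral_envelope_sum_sq_le (h : HasDecayingCovariance ℙ σ C s L W) (c : ι → ℝ≥0∞)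
    (hC : 0 ≤ C) (hs0 : 0 ≤ s) (hs1 : s < 1) (hl : l ≤ L) :
    ∫⁻ ω, envelope c (fun i ω => ∑ j ∈ Finset.range l, W i j ω) ω ^ 2 ∂ℙ ≤ (∑' i, c i * σ i) ^ 2 *
      ENNReal.ofReal ((1 + 2 * C / (1 - s)) * (l * (l : ℝ) ^ (1 - s))) := by
  have : 0 < 1 - s := by linarith
  set R := (1 + 2 * C / (1 - s)) * (l * (l : ℝ) ^ (1 - s))
  have hsqrt : ENNReal.ofReal R = ENNReal.ofReal (Real.sqrt R) ^ 2 := by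
    rw [← ENNReal.ofReal_pow (Real.sqrt_nonneg _), Real.sq_sqrt (by positivity)]
  rw [hsqrt, ← mul_pow, ← ENNReal.tsum_mul_right]
  simp_rw [mul_assoc]
  refine lintegral_tsum_mul_sq_le c (fun i => (Finset.measurable_fun_sum _ fun j _ =>
    h.measurable i j).enorm.aemeasurable) fun i => ?_
  rw [mul_pow, ← hsqrt]
  exact h.lintegral_sum_sq_le hC hs0 hs1 hl i

theorem lintegral_sum_envelope_sq_le (h : HasDecayingCovariance ℙ σ C s L W) (c : ι → ℝ≥0∞)
    (hb : b ≤ L) :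
    ∫⁻ ω, (∑ j ∈ Finset.Ico a b, envelope c (fun i => W i j) ω) ^ 2 ∂ℙ ≤
      (∑' i, c i * σ i) ^ 2 * ENNReal.ofReal ((b - a : ℕ) ^ 2) := by
  refine (lintegral_finset_sum_sq_le _ (fun j _ =>
    (measurable_envelope c fun i => h.measurable i j).aemeasurable) fun j hj =>
    lintegral_envelope_sq_le c (fun i => h.measurable i j) fun i =>
      h.lintegral_sq_le i j ((Finset.mem_Ico.1 hj).2.trans_le hb)).trans_eq ?_
  rw [Finset.sum_const, Nat.card_Ico, nsmul_eq_mul, mul_pow, mul_comm,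
    ENNReal.ofReal_pow (Nat.cast_nonneg _), ENNReal.ofReal_natCast]

theorem lintegral_maximalEnvelope_sq_le (h : HasDecayingCovariance ℙ σ C s L W) (c : ι → ℝ≥0∞)
    (hC : 0 ≤ C) (hs0 : 0 ≤ s) (hs1 : s < 1) (ha : a ≤ L) (hb : b ≤ L) :
    ∫⁻ ω, maximalEnvelope c W a b ω ^ 2 ∂ℙ ≤ (∑' i, c i * σ i) ^ 2 * ENNReal.ofReal
      (2 * ((1 + 2 * C / (1 - s)) * (a * (a : ℝ) ^ (1 - s)) + (b - a : ℕ) ^ 2)) := by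
  have : 0 < 1 - s := by linarith
  have hm : Measurable fun ω => envelope c (fun i ω => ∑ j ∈ Finset.range a, W i j ω) ω ^ 2 :=
    (measurable_envelope c fun i => Finset.measurable_fun_sum _ fun j _ =>
      h.measurable i j).pow_const 2
  refine (lintegral_mono fun ω => add_sq_le_two_mul _ _).trans ?_
  rw [lintegral_const_mul' _ _ (by finiteness), lintegral_add_left hm,
    ENNReal.ofReal_mul zero_le_two, ENNReal.ofReal_ofNat, mul_left_comm,
    ENNReal.ofReal_add (by positivity) (by positivity)]
  gcongr
  rw [mul_add]
  exact add_le_add (h.lintegral_envelope_sum_sq_le c hC hs0 hs1 ha)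
    (h.lintegral_sum_envelope_sq_le c hb)

theorem measure_lt_maximalEnvelope_le (h : HasDecayingCovariance ℙ σ C s L W) (c : ι → ℝ≥0∞)
    (hC : 0 ≤ C) (hs0 : 0 ≤ s) (hs1 : s < 1) (ha : a ≤ L) (hb : b ≤ L) {t : ℝ} (ht : 0 < t) :
    ℙ {ω | ENNReal.ofReal t < maximalEnvelope c W a b ω} ≤ (∑' i, c i * σ i) ^ 2 * ENNReal.ofReal
      (2 * ((1 + 2 * C / (1 - s)) * (a * (a : ℝ) ^ (1 - s)) + (b - a : ℕ) ^ 2) / t ^ 2) := by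
  rw [ENNReal.ofReal_div_of_pos (by positivity), ← mul_div_assoc, ENNReal.ofReal_pow ht.le]
  exact measure_lt_le_of_lintegral_sq_le (h.measurable_maximalEnvelope c a b).aemeasurable
    (h.lintegral_maximalEnvelope_sq_le c hC hs0 hs1 ha hb) (ENNReal.ofReal_pos.2 ht).ne'
    ENNReal.ofReal_ne_top

end HasDecayingCovariance

end MaximalEnvelope

section UniformTail

theorem exists_pow_le_and_lt_succ_pow {a : ℕ} (ha : a ≠ 0) (l : ℕ) :
    ∃ j : ℕ, j ^ a ≤ l ∧ l < (j + 1) ^ a := by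
  have hex : ∃ j : ℕ, l < (j + 1) ^ a :=
    ⟨l, (Nat.lt_succ_self l).trans_le (Nat.le_self_pow ha _)⟩
  refine ⟨Nat.find hex, ?_, Nat.find_spec hex⟩
  rcases Nat.eq_zero_or_pos (Nat.find hex) with hzero | hpos
  · rw [hzero, zero_pow ha]; exact Nat.zero_le _
  · have hmin := Nat.find_min hex (Nat.sub_lt hpos one_pos)
    rwa [Nat.sub_one_add_one hpos.ne', not_lt] at hmin

theorem succ_pow_succ_le (a : ℕ) {j : ℕ} (hj : 1 ≤ j) :
    (j + 1) ^ (a + 1) ≤ j ^ (a + 1) + (a + 1) * (2 * j) ^ a := by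
  induction a with
  | zero => simp
  | succ a ih =>
    have hdouble : (j + 1) ^ (a + 1) ≤ (2 * j) ^ (a + 1) := Nat.pow_le_pow_left (by omega) _
    calc (j + 1) ^ (a + 1 + 1) = (j + 1) ^ (a + 1) * j + (j + 1) ^ (a + 1) := by ring
      _ ≤ (j ^ (a + 1) + (a + 1) * (2 * j) ^ a) * j + (2 * j) ^ (a + 1) :=
          add_le_add (Nat.mul_le_mul_right _ ih) hdouble
      _ = j ^ (a + 1 + 1) + (a + 1) * ((2 * j) ^ a * j) + (2 * j) ^ (a + 1) := by ring
      _ ≤ j ^ (a + 1 + 1) + (a + 1) * ((2 * j) ^ a * (2 * j)) + (2 * j) ^ (a + 1) := by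
          gcongr; omega
      _ = _ := by ring

theorem mul_rpow_add_sq_div_le {D s ε G : ℝ} (hD : 0 ≤ D) {a : ℕ} (has : 2 ≤ ((a + 1 : ℕ) : ℝ) * s)
    {j d : ℕ} (hj : 1 ≤ j) (hd : (d : ℝ) ≤ G * (j : ℝ) ^ a) :
    2 * (D * ((j ^ (a + 1) : ℕ) * ((j ^ (a + 1) : ℕ) : ℝ) ^ (1 - s)) + d ^ 2) /
        (ε * (j ^ (a + 1) : ℕ)) ^ 2 ≤ 2 * (D + G ^ 2) / ε ^ 2 * (1 / (j : ℝ) ^ 2) := by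
  have hj1 : (1 : ℝ) ≤ j := by exact_mod_cast hj
  have hj0 : (0 : ℝ) < j := by positivity
  set n : ℝ := ((j ^ (a + 1) : ℕ) : ℝ) with hn
  have hn0 : 0 < n := by positivity
  have hrpow : n * n ^ (1 - s) ≤ n ^ 2 * (1 / (j : ℝ) ^ 2) := by
    have hexp : n ^ (-s) ≤ 1 / (j : ℝ) ^ 2 := by
      rw [hn, Nat.cast_pow, ← Real.rpow_natCast, ← Real.rpow_mul hj0.le, one_div,
        ← Real.rpow_natCast, ← Real.rpow_neg hj0.le]
      exact Real.rpow_le_rpow_of_exponent_le hj1 (by push_cast at has ⊢; linarith)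
    rw [sub_eq_add_neg, Real.rpow_add hn0, Real.rpow_one, sq, ← mul_assoc]
    gcongr
  have hgap : (d : ℝ) ^ 2 ≤ G ^ 2 * (n ^ 2 * (1 / (j : ℝ) ^ 2)) := by
    refine (pow_le_pow_left₀ (Nat.cast_nonneg d) hd 2).trans_eq ?_
    rw [hn]; push_cast; field_simp; ring
  calc 2 * (D * (n * n ^ (1 - s)) + d ^ 2) / (ε * n) ^ 2
      ≤ 2 * (D * (n ^ 2 * (1 / (j : ℝ) ^ 2)) + G ^ 2 * (n ^ 2 * (1 / (j : ℝ) ^ 2))) /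
          (ε * n) ^ 2 := by gcongr
    _ = 2 * (D + G ^ 2) / ε ^ 2 * (1 / (j : ℝ) ^ 2) := by rw [mul_pow]; field_simp

variable {Ω ι : Type*} [MeasurableSpace Ω] {ℙ : Measure Ω} {σ : ι → ℝ≥0} {C s ε : ℝ} [Countable ι]
  (c : ι → ℝ≥0∞)

namespace HasDecayingCovariance

theorem measure_lt_maximalEnvelope_pow_le {L : ℕ} {W : ι → ℕ → Ω → ℝ}
    (h : HasDecayingCovariance ℙ σ C s L W) (hC : 0 ≤ C) (hs0 : 0 ≤ s) (hs1 : s < 1) {a : ℕ}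
    (has : 2 ≤ ((a + 1 : ℕ) : ℝ) * s) (hε : 0 < ε) {j : ℕ} (hj : 1 ≤ j) (hL : j ^ (a + 1) ≤ L) :
    ℙ {ω | ENNReal.ofReal (ε * (j ^ (a + 1) : ℕ)) <
        maximalEnvelope c W (j ^ (a + 1)) (min ((j + 1) ^ (a + 1)) L) ω} ≤
      (∑' i, c i * σ i) ^ 2 * ENNReal.ofReal
        (2 * (1 + 2 * C / (1 - s) + ((a + 1) * 2 ^ a) ^ 2) / ε ^ 2 * (1 / (j : ℝ) ^ 2)) := by
  have : 0 < 1 - s := by linarith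
  have hgap : min ((j + 1) ^ (a + 1)) L - j ^ (a + 1) ≤ (a + 1) * (2 * j) ^ a := by
    have := succ_pow_succ_le a hj
    omega
  refine (h.measure_lt_maximalEnvelope_le c hC hs0 hs1 hL (min_le_right _ _)
    (by positivity)).trans (mul_le_mul_right (ENNReal.ofReal_le_ofReal ?_) _)
  refine mul_rpow_add_sq_div_le (by positivity) has hj ((Nat.cast_le.2 hgap).trans_eq ?_)
  push_cast
  ring

/-- Chebyshev's inequality along the polynomial subsequence `j ^ (a + 1)`, with `a` so large that
the bounds are summable; the maximal envelope fills the gaps of the subsequence. -/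
theorem exists_measure_mul_lt_envelope_sum_le (hc : ∑' i, c i * σ i ≠ ∞) (hC : 0 ≤ C)
    (hs0 : 0 < s) (hs1 : s < 1) (hε : 0 < ε) {δ : ℝ≥0∞} (hδ : δ ≠ 0) :
    ∃ M : ℕ, 1 ≤ M ∧ ∀ (L : ℕ) (W : ι → ℕ → Ω → ℝ), HasDecayingCovariance ℙ σ C s L W →
      ℙ {ω | ∃ l, M ≤ l ∧ l ≤ L ∧
        ENNReal.ofReal (ε * l) < envelope c (fun i ω => ∑ j ∈ Finset.range l, W i j ω) ω} ≤ δ := by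
  obtain ⟨a, ha⟩ := exists_nat_ge (2 / s)
  have has : 2 ≤ ((a + 1 : ℕ) : ℝ) * s := by
    rw [div_le_iff₀ hs0] at ha
    push_cast; linarith
  set bound : ℕ → ℝ≥0∞ := fun j => (∑' i, c i * σ i) ^ 2 * ENNReal.ofReal
    (2 * (1 + 2 * C / (1 - s) + ((a + 1) * 2 ^ a) ^ 2) / ε ^ 2 * (1 / (j : ℝ) ^ 2))
  have hsum : ∑' j, bound j ≠ ∞ := by
    rw [ENNReal.tsum_mul_left]
    exact ENNReal.mul_ne_top (ENNReal.pow_ne_top hc)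
      ((Real.summable_one_div_nat_pow.2 one_lt_two).mul_left _).tsum_ofReal_ne_top
  obtain ⟨j₀, hj₀, hj₀1⟩ := (((ENNReal.tendsto_sum_nat_add bound hsum).eventually
    (ge_mem_nhds (pos_iff_ne_zero.2 hδ))).and (eventually_ge_atTop 1)).exists
  refine ⟨j₀ ^ (a + 1), Nat.one_le_pow _ _ hj₀1, fun L W h => le_trans ?_ hj₀⟩
  set S : ℕ → Set Ω := fun j => {ω | j ^ (a + 1) ≤ L ∧ ENNReal.ofReal (ε * (j ^ (a + 1) : ℕ)) <
    maximalEnvelope c W (j ^ (a + 1)) (min ((j + 1) ^ (a + 1)) L) ω}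
  have hcover : {ω | ∃ l, j₀ ^ (a + 1) ≤ l ∧ l ≤ L ∧ ENNReal.ofReal (ε * l) <
      envelope c (fun i ω => ∑ j ∈ Finset.range l, W i j ω) ω} ⊆ ⋃ k, S (k + j₀) := by
    rintro ω ⟨l, hl₀, hlL, hlt⟩
    obtain ⟨j, hjl, hlj⟩ := exists_pow_le_and_lt_succ_pow a.succ_ne_zero l
    have hj : j₀ ≤ j := Nat.lt_succ_iff.1
      ((Nat.pow_lt_pow_iff_left a.succ_ne_zero).1 (hl₀.trans_lt hlj))
    refine Set.mem_iUnion.2 ⟨j - j₀, ?_⟩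
    rw [Nat.sub_add_cancel hj]
    refine ⟨hjl.trans hlL, (ENNReal.ofReal_le_ofReal ?_).trans_lt (hlt.trans_le
      (envelope_sum_range_le_maximalEnvelope c W hjl (le_min hlj.le hlL) ω))⟩
    gcongr
  refine (measure_mono hcover).trans ((measure_iUnion_le _).trans
    (ENNReal.tsum_le_tsum fun k => ?_))
  by_cases hL : (k + j₀) ^ (a + 1) ≤ L
  · exact (measure_mono fun ω hω => hω.2).trans (h.measure_lt_maximalEnvelope_pow_le c hC hs0.le hs1
      has hε (hj₀1.trans (Nat.le_add_left _ _)) hL)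
  · simp [S, hL]

theorem measure_exists_lt_envelope_sum_le {L : ℕ} {W : ι → ℕ → Ω → ℝ}
    (h : HasDecayingCovariance ℙ σ C s L W) (hC : 0 ≤ C) (hs0 : 0 ≤ s) (hs1 : s < 1) (M : ℕ) {t : ℝ}
    (ht : 0 < t) :
    ℙ {ω | ∃ l ≤ M, l ≤ L ∧
        ENNReal.ofReal t < envelope c (fun i ω => ∑ j ∈ Finset.range l, W i j ω) ω} ≤
      (∑' i, c i * σ i) ^ 2 * ENNReal.ofReal (2 * M ^ 2 / t ^ 2) := by
  refine (measure_mono ?_).trans ((h.measure_lt_maximalEnvelope_le c hC hs0 hs1 (Nat.zero_le L)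
    (min_le_right M L) ht).trans (mul_le_mul_right (ENNReal.ofReal_le_ofReal ?_) _))
  · rintro ω ⟨l, hlM, hlL, hlt⟩
    exact hlt.trans_le (envelope_sum_range_le_maximalEnvelope c W l.zero_le (le_min hlM hlL) ω)
  · simp only [Nat.cast_zero, zero_mul, mul_zero, zero_add, Nat.sub_zero]
    gcongr
    exact min_le_left M L

end HasDecayingCovariance

end UniformTail

section Contrast

variable {V : Type*} [AddCommGroup V] [Module ℝ V] (N : Seminorm ℝ V)

theorem seminorm_inv_smul {a : ℝ} (ha : 0 < a) (u : V) : N (a⁻¹ • u) = N u / a := by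
  rw [map_smul_eq_mul, Real.norm_of_nonneg (by positivity), inv_mul_eq_div]

theorem sub_two_mul_le_seminorm_mean_sub_mean {a b ε : ℝ} (ha : 0 < a) (hb : 0 < b) {u v p q : V}
    (hu : N (u - a • p) ≤ ε * a) (hv : N (v - b • q) ≤ ε * b) :
    N (p - q) - 2 * ε ≤ N (a⁻¹ • u - b⁻¹ • v) := by
  have hu' : N (a⁻¹ • (u - a • p)) ≤ ε := by rwa [seminorm_inv_smul N ha, div_le_iff₀ ha]
  have hv' : N (b⁻¹ • (v - b • q)) ≤ ε := by rwa [seminorm_inv_smul N hb, div_le_iff₀ hb]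
  have h : p - q = a⁻¹ • u - b⁻¹ • v - (a⁻¹ • (u - a • p) - b⁻¹ • (v - b • q)) := by
    rw [smul_sub, smul_sub, inv_smul_smul₀ ha.ne', inv_smul_smul₀ hb.ne']
    abel
  rw [h]
  linarith [map_sub_le_add N (a⁻¹ • u - b⁻¹ • v) (a⁻¹ • (u - a • p) - b⁻¹ • (v - b • q)),
    map_sub_le_add N (a⁻¹ • (u - a • p)) (b⁻¹ • (v - b • q))]

theorem seminorm_mean_sub_mean_le {k κ n : ℝ} (hk : 0 < k) (hkκ : k < κ) (hκn : κ < n)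
    (u₁ u₂ u₃ p : V) :
    N (k⁻¹ • u₁ - (n - k)⁻¹ • (u₂ + u₃)) ≤ (n - κ) / (n - k) *
      (N (κ⁻¹ • (u₁ + u₂) - (n - κ)⁻¹ • u₃) + n / (n - κ) * (1 - k / κ) *
        (N (u₁ - k • p) / k + N (u₂ - (κ - k) • p) / (κ - k))) := by
  have hκ : 0 < κ := hk.trans hkκ
  have hl : 0 < κ - k := sub_pos.2 hkκ
  have hκn' : 0 < n - κ := sub_pos.2 hκn
  have hkn : 0 < n - k := by linarith
  have hc : 0 ≤ n / (n - κ) * (1 - k / κ) :=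
    mul_nonneg (div_nonneg (by linarith) hκn'.le) (sub_nonneg.2 ((div_le_one hκ).2 hkκ.le))
  have h : k⁻¹ • u₁ - (n - k)⁻¹ • (u₂ + u₃) = ((n - κ) / (n - k)) •
      (κ⁻¹ • (u₁ + u₂) - (n - κ)⁻¹ • u₃ + (n / (n - κ) * (1 - k / κ)) •
        (k⁻¹ • (u₁ - k • p) - (κ - k)⁻¹ • (u₂ - (κ - k) • p))) := by
    match_scalars <;> field_simp <;> ring
  rw [h, map_smul_eq_mul, Real.norm_of_nonneg (by positivity), ← seminorm_inv_smul N hk,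
    ← seminorm_inv_smul N hl]
  gcongr
  refine (map_add_le_add N _ _).trans ?_
  rw [map_smul_eq_mul, Real.norm_of_nonneg hc]
  gcongr
  exact map_sub_le_add N _ _

theorem rpow_mul_lt_rpow_mul {r x y D A T c ε : ℝ} (hr0 : 0 < r) (hr1 : r ≤ 1) (hx0 : 0 < x)
    (hx1 : x < 1) (hy0 : 0 < y) (hy1 : y ≤ 1) (hD : 0 ≤ D) (hc : 0 ≤ c) (hA : x ^ r * A ≤ ε)
    (hT0 : 0 ≤ T) (hT : T ≤ ε) (hgap : 2 * ε * c < r * D) :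
    x ^ r * (y * (D + c * (1 - x) * (A + T))) < y ^ r * D := by
  have hy : y ≤ y ^ r := by simpa using Real.rpow_le_rpow_of_exponent_ge hy0 hy1 hr1
  have hx : x ^ r ≤ 1 - r * (1 - x) := by
    have h := rpow_one_add_le_one_add_mul_self (s := x - 1) (p := r) (by linarith) hr0.le hr1
    rw [add_sub_cancel] at h
    linarith
  have hxT : x ^ r * T ≤ ε :=
    (mul_le_of_le_one_left hT0 (Real.rpow_le_one hx0.le hx1.le hr0.le)).trans hT
  have : 0 ≤ c * (1 - x) := mul_nonneg hc (by linarith)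
  calc x ^ r * (y * (D + c * (1 - x) * (A + T)))
      = y * (x ^ r * D + c * (1 - x) * (x ^ r * A + x ^ r * T)) := by ring
    _ ≤ y * ((1 - r * (1 - x)) * D + c * (1 - x) * (ε + ε)) := by gcongr
    _ = y * (D - (1 - x) * (r * D - 2 * ε * c)) := by ring
    _ < y * D := by
        gcongr
        exact sub_lt_self _ (mul_pos (by linarith) (by linarith))
    _ ≤ y ^ r * D := by gcongr

theorem rpow_mul_seminorm_mean_sub_mean_lt {r k κ n ε b η : ℝ} (hr0 : 0 < r) (hr1 : r ≤ 1)
    (hk : 0 < k) (hkκ : k < κ) (hκn : κ < n) (hη : 0 < η) (hηn : η * n ≤ n - κ)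
    (hb : 2 * ε < r * η * (b - 2 * ε)) {u₁ u₂ u₃ p q : V}
    (h₁ : (k / κ) ^ r * (N (u₁ - k • p) / k) ≤ ε) (h₂ : N (u₂ - (κ - k) • p) ≤ ε * (κ - k))
    (h₁₂ : N (u₁ + u₂ - κ • p) ≤ ε * κ) (h₃ : N (u₃ - (n - κ) • q) ≤ ε * (n - κ))
    (hpq : b ≤ N (p - q)) :
    (k / n * (1 - k / n)) ^ r * N (k⁻¹ • u₁ - (n - k)⁻¹ • (u₂ + u₃)) <
      (κ / n * (1 - κ / n)) ^ r * N (κ⁻¹ • (u₁ + u₂) - (n - κ)⁻¹ • u₃) := by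
  have hκ : 0 < κ := hk.trans hkκ
  have hn : 0 < n := hκ.trans hκn
  have hl : 0 < κ - k := sub_pos.2 hkκ
  have hκn' : 0 < n - κ := sub_pos.2 hκn
  have hkn : 0 < n - k := by linarith
  set x := k / κ
  set y := (n - κ) / (n - k)
  set D := N (κ⁻¹ • (u₁ + u₂) - (n - κ)⁻¹ • u₃)
  have hx0 : 0 < x := by positivity
  have hy0 : 0 < y := by positivity
  have hε : 0 ≤ ε := nonneg_of_mul_nonneg_left ((apply_nonneg N _).trans h₁₂) hκ
  have hD : b - 2 * ε ≤ D := by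
    linarith [sub_two_mul_le_seminorm_mean_sub_mean N hκ hκn' h₁₂ h₃]
  have hgap : 2 * ε * (n / (n - κ)) < r * D := by
    have hc : n / (n - κ) ≤ 1 / η := by rw [div_le_div_iff₀ hκn' hη]; linarith
    calc 2 * ε * (n / (n - κ)) ≤ 2 * ε * (1 / η) := by gcongr
      _ < r * (b - 2 * ε) := by rw [mul_one_div, div_lt_iff₀ hη]; linarith
      _ ≤ r * D := by gcongr
  have hw0 : 0 < κ / n * (1 - κ / n) :=
    mul_pos (by positivity) (sub_pos.2 ((div_lt_one hn).2 hκn))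
  have hw : k / n * (1 - k / n) = κ / n * (1 - κ / n) * (x / y) := by simp only [x, y]; field_simp
  rw [hw, Real.mul_rpow hw0.le (by positivity), mul_assoc, Real.div_rpow hx0.le hy0.le]
  gcongr
  rw [div_mul_eq_mul_div, div_lt_iff₀ (by positivity), mul_comm D]
  refine (mul_le_mul_of_nonneg_left (seminorm_mean_sub_mean_le N hk hkκ hκn u₁ u₂ u₃ p)
    (by positivity)).trans_lt ?_
  exact rpow_mul_lt_rpow_mul hr0 hr1 hx0 ((div_lt_one hκ).2 hkκ) hy0
    ((div_le_one hkn).2 (by linarith)) (apply_nonneg N _) (by positivity) h₁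
    (div_nonneg (apply_nonneg N _) hl.le) ((div_le_iff₀ hl).2 h₂) hgap

/-- The partial sums of the `L` first terms of `w` are close to those of the constant sequence
`p`, with relative error `ε` from the index `M` on. Below `M` no relative error is available, but
the weight of the contrast leaves room for the absolute error `ε L ^ r`. -/
structure IsConcentrated (p : V) (ε r : ℝ) (M L : ℕ) (w : ℕ → V) : Prop where
  long : ∀ l, M ≤ l → l ≤ L → N (∑ j ∈ Finset.range l, w j - (l : ℝ) • p) ≤ ε * l
  short : ∀ l ≤ M, l ≤ L → N (∑ j ∈ Finset.range l, w j - (l : ℝ) • p) ≤ ε * (L : ℝ) ^ r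

/-- Among the `n` first terms of `w`, those before the index `κ` have partial sums close to
multiples of `p` and the others to multiples of `q`, whether they are summed upwards or
downwards. -/
structure HasConcentratedSegments (p q : V) (ε r : ℝ) (M n κ : ℕ) (w : ℕ → V) : Prop where
  left : IsConcentrated N p ε r M κ w
  left_reverse : IsConcentrated N p ε r M κ fun j => w (κ - 1 - j)
  right : IsConcentrated N q ε r M (n - κ) fun j => w (κ + j)
  right_reverse : IsConcentrated N q ε r M (n - κ) fun j => w (n - 1 - j)

/-- The seminorm of the paper's `D_k`: the weighted seminorm of the difference between the means of
`w 0, …, w (k - 1)` and of `w k, …, w (n - 1)`. -/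
noncomputable def contrast (r : ℝ) (n : ℕ) (w : ℕ → V) (k : ℕ) : ℝ :=
  ((k : ℝ) / n * (1 - (k : ℝ) / n)) ^ r *
    N ((k : ℝ)⁻¹ • ∑ i ∈ Finset.range k, w i - ((n : ℝ) - k)⁻¹ • ∑ i ∈ Finset.Ico k n, w i)

variable {N} {r ε b η : ℝ} {n κ k M L : ℕ} {w w' : ℕ → V} {p q : V}

theorem IsConcentrated.congr (h : IsConcentrated N p ε r M L w) (hw : ∀ j < L, w j = w' j) :
    IsConcentrated N p ε r M L w' := by
  have hsum : ∀ l ≤ L, ∑ j ∈ Finset.range l, w' j = ∑ j ∈ Finset.range l, w j := fun l hl =>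
    Finset.sum_congr rfl fun j hj => (hw j ((Finset.mem_range.1 hj).trans_le hl)).symm
  exact ⟨fun l hM hl => hsum l hl ▸ h.long l hM hl, fun l hM hl => hsum l hl ▸ h.short l hM hl⟩

theorem IsConcentrated.rpow_mul_le (h : IsConcentrated N p ε r M κ w) (hr0 : 0 ≤ r) (hr1 : r ≤ 1)
    (hk : 1 ≤ k) (hkκ : k ≤ κ) :
    ((k : ℝ) / κ) ^ r * (N (∑ j ∈ Finset.range k, w j - (k : ℝ) • p) / k) ≤ ε := by
  have hk0 : (0 : ℝ) < k := by exact_mod_cast hk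
  have hκ0 : (0 : ℝ) < κ := by exact_mod_cast hk.trans hkκ
  set A := N (∑ j ∈ Finset.range k, w j - (k : ℝ) • p)
  have hA0 : 0 ≤ A := apply_nonneg N _
  rcases le_total M k with hMk | hkM
  · have hx1 : ((k : ℝ) / κ) ^ r ≤ 1 :=
      Real.rpow_le_one (by positivity) ((div_le_one hκ0).2 (by exact_mod_cast hkκ)) hr0
    refine (mul_le_of_le_one_left (by positivity) hx1).trans ?_
    rw [div_le_iff₀ hk0]
    exact h.long k hMk hkκ
  · have hk1 : (k : ℝ) ^ r ≤ k := by
      simpa using Real.rpow_le_rpow_of_exponent_le (x := (k : ℝ)) (by exact_mod_cast hk) hr1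
    rw [Real.div_rpow hk0.le hκ0.le, div_mul_div_comm, div_le_iff₀ (by positivity)]
    calc (k : ℝ) ^ r * A ≤ k * (ε * (κ : ℝ) ^ r) :=
          mul_le_mul hk1 (h.short k hkM hkκ) hA0 hk0.le
      _ = ε * ((κ : ℝ) ^ r * k) := by ring

theorem HasConcentratedSegments.reverse (h : HasConcentratedSegments N p q ε r M n κ w)
    (hκ : κ ≤ n) :
    HasConcentratedSegments N q p ε r M n (n - κ) fun j => w (n - 1 - j) where
  left := h.right_reverse
  left_reverse := h.right.congr fun j hj => by congr 1; omega
  right := (Nat.sub_sub_self hκ).symm ▸ h.left_reverse.congr fun j hj => by congr 1; omega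
  right_reverse := (Nat.sub_sub_self hκ).symm ▸ h.left.congr fun j hj => by congr 1; omega

theorem contrast_reverse (N : Seminorm ℝ V) (r : ℝ) (w : ℕ → V) (hk : k < n) :
    contrast N r n (fun j => w (n - 1 - j)) (n - k) = contrast N r n w k := by
  have hn : (n : ℝ) ≠ 0 := by exact_mod_cast (Nat.zero_le k).trans_lt hk |>.ne'
  have hn1 : n - 1 + 1 = n := by omega
  have hfst : ∑ j ∈ Finset.range (n - k), w (n - 1 - j) = ∑ j ∈ Finset.Ico k n, w j := by
    rw [Finset.range_eq_Ico, Finset.sum_Ico_reflect w 0 (by omega), hn1, Nat.sub_zero,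
      Nat.sub_sub_self hk.le]
  have hsnd : ∑ j ∈ Finset.Ico (n - k) n, w (n - 1 - j) = ∑ j ∈ Finset.range k, w j := by
    rw [Finset.range_eq_Ico, Finset.sum_Ico_reflect w _ hn1.ge, hn1, Nat.sub_self,
      Nat.sub_sub_self hk.le]
  rw [contrast, contrast, hfst, hsnd, ← map_neg_eq_map N, neg_sub, Nat.cast_sub hk.le,
    sub_sub_cancel]
  congr 2
  field_simp
  ring

theorem HasConcentratedSegments.contrast_lt (h : HasConcentratedSegments N p q ε r M n κ w)
    (hr0 : 0 < r) (hr1 : r ≤ 1) (hM : 1 ≤ M) (hMκ : M ≤ n - κ) (hη : 0 < η)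
    (hηn : η * n ≤ n - κ) (hb : 2 * ε < r * η * (b - 2 * ε)) (hpq : b ≤ N (p - q)) (hk : 1 ≤ k)
    (hkκ : k + M ≤ κ) : contrast N r n w k < contrast N r n w κ := by
  have hkκ' : k < κ := by omega
  have hκn : κ < n := by omega
  have hl : 0 < κ := by omega
  have hright : ∑ i ∈ Finset.Ico k n, w i =
      ∑ i ∈ Finset.Ico k κ, w i + ∑ i ∈ Finset.Ico κ n, w i :=
    (Finset.sum_Ico_consecutive w hkκ'.le hκn.le).symm
  have hleft : ∑ i ∈ Finset.range κ, w i =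
      ∑ i ∈ Finset.range k, w i + ∑ i ∈ Finset.Ico k κ, w i :=
    (Finset.sum_range_add_sum_Ico w hkκ'.le).symm
  have hmid : ∑ i ∈ Finset.Ico k κ, w i = ∑ j ∈ Finset.range (κ - k), w (κ - 1 - j) := by
    rw [Finset.range_eq_Ico, Finset.sum_Ico_reflect w 0 (by omega), Nat.sub_add_cancel hl,
      Nat.sub_zero, Nat.sub_sub_self hkκ'.le]
  rw [contrast, contrast, hright, hleft]
  refine rpow_mul_seminorm_mean_sub_mean_lt N hr0 hr1 (by exact_mod_cast hk)
    (by exact_mod_cast hkκ') (by exact_mod_cast hκn) hη hηn hb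
    (h.left.rpow_mul_le hr0.le hr1 hk hkκ'.le) ?_ ?_ ?_ hpq
  · rw [hmid, ← Nat.cast_sub hkκ'.le]
    exact h.left_reverse.long _ (by omega) (Nat.sub_le _ _)
  · rw [← hleft]
    exact h.left.long κ (by omega) le_rfl
  · rw [Finset.sum_Ico_eq_sum_range, ← Nat.cast_sub hκn.le]
    exact h.right.long _ hMκ le_rfl

theorem HasConcentratedSegments.abs_argmax_sub_lt
    (h : HasConcentratedSegments N p q ε r M n κ w) (hr0 : 0 < r) (hr1 : r ≤ 1) (hM : 1 ≤ M)
    (hMκ : M ≤ κ) (hMn : M ≤ n - κ) (hη : 0 < η) (hηκ : η * n ≤ κ) (hηn : η * n ≤ n - κ)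
    (hb : 2 * ε < r * η * (b - 2 * ε)) (hpq : b ≤ N (p - q)) (hk : 1 ≤ k) (hkn : k < n)
    (hmax : contrast N r n w κ ≤ contrast N r n w k) : |(k : ℝ) - κ| < M := by
  have hκn : κ < n := by omega
  have hlower : κ < k + M := lt_of_not_ge fun hkκ =>
    (h.contrast_lt hr0 hr1 hM hMn hη hηn hb hpq hk hkκ).not_ge hmax
  have hupper : k < κ + M := lt_of_not_ge fun hkκ => by
    rw [← contrast_reverse N r w hκn, ← contrast_reverse N r w hkn] at hmax
    refine ((h.reverse hκn.le).contrast_lt hr0 hr1 hM (by omega) hη ?_ hb ?_ (by omega)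
      (by omega)).not_ge hmax
    · rwa [Nat.cast_sub hκn.le, sub_sub_cancel]
    · rwa [← map_neg_eq_map N, neg_sub]
  rw [abs_sub_lt_iff, sub_lt_iff_lt_add, sub_lt_iff_lt_add]
  exact ⟨by exact_mod_cast Nat.add_comm κ M ▸ hupper, by exact_mod_cast Nat.add_comm k M ▸ hlower⟩

end Contrast

section Blocks

variable {E : Type*} [MeasurableSpace E]

theorem toSignedMeasure_sum_dirac (z : ℕ → E) (l : ℕ) :
    (∑ j ∈ Finset.range l, Measure.dirac (z j)).toSignedMeasure =
      ∑ j ∈ Finset.range l, (Measure.dirac (z j)).toSignedMeasure := by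
  induction l with
  | zero => simp
  | succ l ih =>
    refine (Measure.toSignedMeasure_congr (Finset.sum_range_succ _ l)).trans ?_
    rw [Measure.toSignedMeasure_add, ih, Finset.sum_range_succ]

variable {ι : Type*} {c : ι → ℝ≥0∞} {g : ι → E → ℝ} {N : Seminorm ℝ (SignedMeasure E)}
  {π : Measure E}

theorem IsControlledBy.ofReal_sum_dirac_sub_le [Countable ι] [IsFiniteMeasure π]
    (hN : IsControlledBy N c g) (hg : ∀ i, Measurable (g i)) (hπ : ∫⁻ x, envelope c g x ∂π ≠ ∞)
    {z : ℕ → E} {l : ℕ} (hz : ∀ j < l, envelope c g (z j) ≠ ∞) :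
    ENNReal.ofReal (N (∑ j ∈ Finset.range l, (Measure.dirac (z j)).toSignedMeasure -
        (l : ℝ) • π.toSignedMeasure)) ≤
      ∑' i, c i * ‖∑ j ∈ Finset.range l, (g i (z j) - ∫ x, g i x ∂π)‖ₑ := by
  have h := hN (∑ j ∈ Finset.range l, Measure.dirac (z j)) ((l : ℝ≥0) • π) ?_ ?_
  · rw [toSignedMeasure_sum_dirac, Measure.toSignedMeasure_smul] at h
    refine h.trans_eq (tsum_congr fun i => ?_)
    rw [integral_finsetSum_measure fun j _ =>
      integrable_dirac' (hg i).stronglyMeasurable enorm_lt_top, integral_smul_nnreal_measure]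
    simp_rw [integral_dirac' _ _ (hg i).stronglyMeasurable]
    rw [Finset.sum_sub_distrib, Finset.sum_const, Finset.card_range, nsmul_eq_mul,
      NNReal.smul_def, smul_eq_mul, NNReal.coe_natCast]
  · rw [lintegral_finsetSum_measure]
    simp_rw [lintegral_dirac' _ (measurable_envelope c hg)]
    exact ENNReal.sum_ne_top.2 fun j hj => hz j (Finset.mem_range.1 hj)
  · rw [lintegral_smul_measure]
    exact ENNReal.mul_ne_top ENNReal.coe_ne_top hπ

variable {Ω : Type*} [MeasurableSpace Ω]

/-- The first `L` observations `Z j` have law `π`, and the family `g` evaluated along them has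
second moments at most `σ i ^ 2` and covariances bounded by `C * m ^ (-s) * σ i ^ 2` at
distance `m`. -/
structure IsDecayingBlock (ℙ : Measure Ω) (g : ι → E → ℝ) (σ : ι → ℝ≥0) (C s : ℝ) (π : Measure E)
    (L : ℕ) (Z : ℕ → Ω → E) : Prop where
  measurable : ∀ j, Measurable (Z j)
  map_eq : ∀ j < L, Measure.map (Z j) ℙ = π
  lintegral_sq_le : ∀ i, ∫⁻ x, ‖g i x‖ₑ ^ 2 ∂π ≤ (σ i : ℝ≥0∞) ^ 2
  abs_covar_le : ∀ i j m, j + (m + 1) < L →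
    |covar ℙ (fun ω => g i (Z j ω)) (fun ω => g i (Z (j + (m + 1)) ω))| ≤
      C * ((m + 1 : ℕ) : ℝ) ^ (-s) * (σ i : ℝ) ^ 2

variable {ℙ : Measure Ω} {σ : ι → ℝ≥0} {C s : ℝ} {L : ℕ} {Z : ℕ → Ω → E}

theorem covar_comm (Y Y' : Ω → ℝ) : covar ℙ Y Y' = covar ℙ Y' Y := by
  simp only [covar, mul_comm]

namespace IsDecayingBlock

theorem reverse (h : IsDecayingBlock ℙ g σ C s π L Z) :
    IsDecayingBlock ℙ g σ C s π L fun j => Z (L - 1 - j) where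
  measurable _ := h.measurable _
  map_eq _ _ := h.map_eq _ (by omega)
  lintegral_sq_le := h.lintegral_sq_le
  abs_covar_le i j m hjm := by
    have hj : L - 1 - (j + (m + 1)) + (m + 1) = L - 1 - j := by omega
    have h' := h.abs_covar_le i (L - 1 - (j + (m + 1))) m (by omega)
    rwa [hj, covar_comm] at h'

theorem mono {s' : ℝ} (h : IsDecayingBlock ℙ g σ C s π L Z) (hC : 0 ≤ C) (hs : s' ≤ s) :
    IsDecayingBlock ℙ g σ C s' π L Z where
  measurable := h.measurable
  map_eq := h.map_eq
  lintegral_sq_le := h.lintegral_sq_le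
  abs_covar_le i j m hjm := by
    refine (h.abs_covar_le i j m hjm).trans ?_
    gcongr
    exact_mod_cast m.succ_pos

theorem lintegral_comp_eq (h : IsDecayingBlock ℙ g σ C s π L Z) {j : ℕ} (hj : j < L)
    {u : E → ℝ≥0∞} (hu : Measurable u) : ∫⁻ ω, u (Z j ω) ∂ℙ = ∫⁻ x, u x ∂π := by
  rw [← h.map_eq j hj, lintegral_map hu (h.measurable j)]

theorem integral_comp_eq (h : IsDecayingBlock ℙ g σ C s π L Z) {j : ℕ} (hj : j < L)
    {u : E → ℝ} (hu : Measurable u) : ∫ ω, u (Z j ω) ∂ℙ = ∫ x, u x ∂π := by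
  rw [← h.map_eq j hj, integral_map (h.measurable j).aemeasurable hu.aestronglyMeasurable]

theorem lintegral_sub_integral_sq_le [IsProbabilityMeasure ℙ]
    (h : IsDecayingBlock ℙ g σ C s π L Z) (hg : ∀ i, Measurable (g i)) (i : ι) {j : ℕ}
    (hj : j < L) : ∫⁻ ω, ‖g i (Z j ω) - ∫ x, g i x ∂π‖ₑ ^ 2 ∂ℙ ≤ (σ i : ℝ≥0∞) ^ 2 := by
  have hm : AEStronglyMeasurable (fun ω => g i (Z j ω)) ℙ :=
    ((hg i).comp (h.measurable j)).aestronglyMeasurable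
  have hsq : ∫⁻ ω, ‖g i (Z j ω)‖ₑ ^ 2 ∂ℙ ≤ (σ i : ℝ≥0∞) ^ 2 :=
    (h.lintegral_comp_eq hj ((hg i).enorm.pow_const 2)).trans_le (h.lintegral_sq_le i)
  have hL : MemLp (fun ω => g i (Z j ω)) 2 ℙ :=
    memLp_two_of_lintegral_enorm_sq_ne_top hm (hsq.trans_lt (by finiteness)).ne
  have hL' : MemLp (fun ω => g i (Z j ω) - ∫ ω, g i (Z j ω) ∂ℙ) 2 ℙ := hL.sub (memLp_const _)
  refine le_trans ?_ hsq
  rw [← h.integral_comp_eq hj (hg i), lintegral_enorm_sq_eq hL, lintegral_enorm_sq_eq hL',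
    ← ProbabilityTheory.variance_eq_integral hm.aemeasurable]
  exact ENNReal.ofReal_le_ofReal (ProbabilityTheory.variance_le_expectation_sq hm)

theorem hasDecayingCovariance [IsProbabilityMeasure ℙ] (h : IsDecayingBlock ℙ g σ C s π L Z)
    (hg : ∀ i, Measurable (g i)) :
    HasDecayingCovariance ℙ σ C s L fun i j ω => g i (Z j ω) - ∫ x, g i x ∂π where
  measurable i j := ((hg i).comp (h.measurable j)).sub_const _
  lintegral_sq_le i _ hj := h.lintegral_sub_integral_sq_le hg i hj
  integral_mul_le i j m hjm := by
    have hcov := (le_abs_self _).trans (h.abs_covar_le i j m hjm)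
    rwa [covar, h.integral_comp_eq (by omega) (hg i), h.integral_comp_eq hjm (hg i)] at hcov

theorem ae_ofReal_sum_dirac_sub_le [Countable ι] [IsFiniteMeasure π]
    (h : IsDecayingBlock ℙ g σ C s π L Z) (hg : ∀ i, Measurable (g i))
    (hcσ : ∑' i, c i * σ i ≠ ∞) (hN : IsControlledBy N c g) :
    ∀ᵐ ω ∂ℙ, ∀ l ≤ L,
      ENNReal.ofReal (N (∑ j ∈ Finset.range l, (Measure.dirac (Z j ω)).toSignedMeasure -
          (l : ℝ) • π.toSignedMeasure)) ≤
        envelope c (fun i ω => ∑ j ∈ Finset.range l, (g i (Z j ω) - ∫ x, g i x ∂π)) ω := by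
  have hπ : ∫⁻ x, envelope c g x ∂π ≠ ∞ := lintegral_envelope_ne_top hcσ hg h.lintegral_sq_le
  have hG := measurable_envelope c hg
  have hae : ∀ᵐ ω ∂ℙ, ∀ j < L, envelope c g (Z j ω) ≠ ∞ := by
    refine ae_all_iff.2 fun j => eventually_imp_distrib_left.2 fun hj => ?_
    rw [← h.lintegral_comp_eq hj hG] at hπ
    exact (ae_lt_top (hG.comp (h.measurable j)) hπ).mono fun ω => LT.lt.ne
  filter_upwards [hae] with ω hω l hl
  exact hN.ofReal_sum_dirac_sub_le hg hπ fun j hj => hω j (hj.trans_le hl)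

theorem measure_not_isConcentrated_le [Countable ι] [IsFiniteMeasure π]
    (h : IsDecayingBlock ℙ g σ C s π L Z) (hg : ∀ i, Measurable (g i))
    (hcσ : ∑' i, c i * σ i ≠ ∞) (hN : IsControlledBy N c g) {ε r : ℝ} (hε : 0 ≤ ε) (M : ℕ) :
    ℙ {ω | ¬ IsConcentrated N π.toSignedMeasure ε r M L
        fun j => (Measure.dirac (Z j ω)).toSignedMeasure} ≤
      ℙ {ω | ∃ l, M ≤ l ∧ l ≤ L ∧ ENNReal.ofReal (ε * l) <
          envelope c (fun i ω => ∑ j ∈ Finset.range l, (g i (Z j ω) - ∫ x, g i x ∂π)) ω} +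
        ℙ {ω | ∃ l ≤ M, l ≤ L ∧ ENNReal.ofReal (ε * (L : ℝ) ^ r) <
          envelope c (fun i ω => ∑ j ∈ Finset.range l, (g i (Z j ω) - ∫ x, g i x ∂π)) ω} := by
  refine (measure_mono_ae ?_).trans (measure_union_le _ _)
  filter_upwards [h.ae_ofReal_sum_dirac_sub_le hg hcσ hN] with ω hω
  refine fun hfail => by_contra fun hnot => hfail ?_
  obtain ⟨hlong, hshort⟩ := not_or.1 hnot
  refine ⟨fun l hM hl => ?_, fun l hM hl => ?_⟩ <;>
    refine (ENNReal.ofReal_le_ofReal_iff (by positivity)).1 ((hω l hl).trans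
      (not_lt.1 fun hlt => ?_))
  · exact hlong ⟨l, hM, hl, hlt⟩
  · exact hshort ⟨l, hM, hl, hlt⟩

end IsDecayingBlock

theorem exists_eventually_measure_not_isConcentrated_le (ℙ : Measure Ω) [IsProbabilityMeasure ℙ]
    [Countable ι] (hg : ∀ i, Measurable (g i)) (hcσ : ∑' i, c i * σ i ≠ ∞)
    (hN : IsControlledBy N c g) (hC : 0 ≤ C) (hs0 : 0 < s) (hs1 : s < 1) {ε r : ℝ} (hε : 0 < ε)
    (hr : 0 < r) {δ : ℝ≥0∞} (hδ : δ ≠ 0) :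
    ∃ M : ℕ, 1 ≤ M ∧ ∀ᶠ L : ℕ in atTop, ∀ (π : Measure E) [IsFiniteMeasure π] (Z : ℕ → Ω → E),
      IsDecayingBlock ℙ g σ C s π L Z →
        ℙ {ω | ¬ IsConcentrated N π.toSignedMeasure ε r M L
          fun j => (Measure.dirac (Z j ω)).toSignedMeasure} ≤ δ := by
  have hδ2 : δ / 2 ≠ 0 := (ENNReal.half_pos hδ).ne'
  obtain ⟨M, hM, hlong⟩ :=
    HasDecayingCovariance.exists_measure_mul_lt_envelope_sum_le (ℙ := ℙ) c hcσ hC hs0 hs1 hε hδ2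
  have hshort : ∀ᶠ L : ℕ in atTop,
      (∑' i, c i * σ i) ^ 2 * ENNReal.ofReal (2 * M ^ 2 / (ε * (L : ℝ) ^ r) ^ 2) ≤ δ / 2 := by
    have ht : Tendsto (fun L : ℕ => (ε * (L : ℝ) ^ r) ^ 2) atTop atTop :=
      (tendsto_pow_atTop two_ne_zero).comp
        (((tendsto_rpow_atTop hr).comp tendsto_natCast_atTop_atTop).const_mul_atTop hε)
    have h0 := ENNReal.Tendsto.const_mul (a := (∑' i, c i * σ i) ^ 2)
      (ENNReal.tendsto_ofReal (ht.const_div_atTop (2 * (M : ℝ) ^ 2)))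
      (Or.inr (ENNReal.pow_ne_top hcσ))
    rw [ENNReal.ofReal_zero, mul_zero] at h0
    exact h0.eventually (ge_mem_nhds (pos_iff_ne_zero.2 hδ2))
  refine ⟨M, hM, ?_⟩
  filter_upwards [hshort, eventually_gt_atTop 0] with L hL hL0 π _ Z hZ
  have hW := hZ.hasDecayingCovariance hg
  refine (hZ.measure_not_isConcentrated_le hg hcσ hN hε.le M).trans ?_
  rw [← ENNReal.add_halves δ]
  exact add_le_add (hlong L _ hW)
    ((hW.measure_exists_lt_envelope_sum_le c hC hs0.le hs1 M (by positivity)).trans hL)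

end Blocks

section Rate

theorem eventually_mul_le_floor_mul {θ : ℝ} (hθ0 : 0 < θ) :
    ∀ᶠ n : ℕ in atTop, min (θ / 2) (1 - θ) * n ≤ ⌊(n : ℝ) * θ⌋₊ ∧
      min (θ / 2) (1 - θ) * n ≤ n - ⌊(n : ℝ) * θ⌋₊ := by
  filter_upwards [tendsto_natCast_atTop_atTop.eventually_ge_atTop (2 / θ)] with n hn
  rw [div_le_iff₀ hθ0] at hn
  have hn0 : (0 : ℝ) ≤ n := Nat.cast_nonneg n
  constructor
  · refine (mul_le_mul_of_nonneg_right (min_le_left _ _) hn0).trans ?_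
    linarith [Nat.lt_floor_add_one ((n : ℝ) * θ)]
  · refine (mul_le_mul_of_nonneg_right (min_le_right _ _) hn0).trans ?_
    linarith [Nat.floor_le (mul_nonneg hn0 hθ0.le)]

theorem isOp_inv_mul_sub {Ω : Type*} [MeasurableSpace Ω] {μ : Measure Ω} {θ : ℝ} (hθ : 0 ≤ θ)
    {k : ℕ → Ω → ℕ} (h : ∀ δ : ℝ≥0∞, δ ≠ 0 → ∃ M : ℕ, ∀ᶠ n : ℕ in atTop,
      μ {ω | (M : ℝ) ≤ |(k n ω : ℝ) - ⌊(n : ℝ) * θ⌋₊|} ≤ δ) :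
    IsOp μ (fun n ω => (n : ℝ)⁻¹ * k n ω - θ) fun n => (n : ℝ)⁻¹ := by
  refine ENNReal.tendsto_nhds_zero.2 fun δ hδ => ?_
  obtain ⟨M, hM⟩ := h δ hδ.ne'
  filter_upwards [eventually_ge_atTop ((M : ℝ) + 1)] with T hT
  refine limsup_le_of_le (h := ?_)
  filter_upwards [hM, eventually_gt_atTop 0] with n hn hn0
  refine (measure_mono fun ω (hω : T * (n : ℝ)⁻¹ < |(n : ℝ)⁻¹ * k n ω - θ|) => ?_).trans hn
  have hn' : (0 : ℝ) < n := by exact_mod_cast hn0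
  have hscale : (n : ℝ)⁻¹ * k n ω - θ = (k n ω - n * θ) * (n : ℝ)⁻¹ := by field_simp
  rw [hscale, abs_mul, abs_of_pos (inv_pos.2 hn'), mul_lt_mul_iff_left₀ (inv_pos.2 hn')] at hω
  have hfloor : |(⌊(n : ℝ) * θ⌋₊ : ℝ) - n * θ| ≤ 1 := abs_sub_le_iff.2
    ⟨by linarith [Nat.floor_le (mul_nonneg hn'.le hθ)], by linarith [Nat.lt_floor_add_one (n * θ)]⟩
  have htri := abs_sub_le (k n ω : ℝ) ⌊(n : ℝ) * θ⌋₊ (n * θ)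
  exact show (M : ℝ) ≤ _ by linarith

/-- The smallest maximizer of `u` over `1 ≤ k < n`; it is `0` when `n ≤ 1`. -/
noncomputable def firstArgmax (n : ℕ) (u : ℕ → ℝ) : ℕ :=
  sInf {k | k ∈ Finset.Ico 1 n ∧ ∀ j ∈ Finset.Ico 1 n, u j ≤ u k}

theorem firstArgmax_spec {n : ℕ} (hn : 2 ≤ n) (u : ℕ → ℝ) :
    firstArgmax n u ∈ Finset.Ico 1 n ∧ ∀ j ∈ Finset.Ico 1 n, u j ≤ u (firstArgmax n u) :=
  Nat.sInf_mem (Finset.exists_max_image (Finset.Ico 1 n) u ⟨1, by simp; omega⟩)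

theorem firstArgmax_congr {n : ℕ} {u u' : ℕ → ℝ} (h : ∀ k ∈ Finset.Ico 1 n, u k = u' k) :
    firstArgmax n u = firstArgmax n u' := by
  refine congrArg sInf (Set.ext fun k => and_congr_right fun hk => forall₂_congr fun j hj => ?_)
  rw [h j hj, h k hk]

variable {Ω : Type*} [MeasurableSpace Ω] {ℙ : Measure Ω} [IsProbabilityMeasure ℙ]
  {E : Type*} [MeasurableSpace E] {ι : Type*} [Countable ι] {N : Seminorm ℝ (SignedMeasure E)}
  {c : ι → ℝ≥0∞} {σ : ι → ℝ≥0} {g : ι → E → ℝ} {C s : ℝ} {P Q : ℕ → Measure E}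
  [∀ n, IsFiniteMeasure (P n)] [∀ n, IsFiniteMeasure (Q n)] {Z : ℕ → ℕ → Ω → E} {κ : ℕ → ℕ}

theorem exists_eventually_measure_not_hasConcentratedSegments_le (hg : ∀ i, Measurable (g i))
    (hcσ : ∑' i, c i * σ i ≠ ∞) (hN : IsControlledBy N c g) (hC : 0 ≤ C) (hs0 : 0 < s)
    (hs1 : s < 1) (hκ : Tendsto κ atTop atTop) (hnκ : Tendsto (fun n => n - κ n) atTop atTop)
    (hP : ∀ n, IsDecayingBlock ℙ g σ C s (P n) (κ n) (Z n))
    (hQ : ∀ n, IsDecayingBlock ℙ g σ C s (Q n) (n - κ n) fun j => Z n (κ n + j))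
    {ε r : ℝ} (hε : 0 < ε) (hr : 0 < r) {δ : ℝ≥0∞} (hδ : δ ≠ 0) :
    ∃ M : ℕ, 1 ≤ M ∧ ∀ᶠ n : ℕ in atTop,
      ℙ {ω | ¬ HasConcentratedSegments N (P n).toSignedMeasure (Q n).toSignedMeasure ε r M n (κ n)
        fun j => (Measure.dirac (Z n j ω)).toSignedMeasure} ≤ δ := by
  have hδ4 : δ / 2 / 2 ≠ 0 := (ENNReal.half_pos (ENNReal.half_pos hδ).ne').ne'
  obtain ⟨M, hM, h⟩ :=
    exists_eventually_measure_not_isConcentrated_le ℙ hg hcσ hN hC hs0 hs1 hε hr hδ4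
  refine ⟨M, hM, ?_⟩
  filter_upwards [hκ.eventually h, hnκ.eventually h] with n hl hr
  rw [← ENNReal.add_halves δ, ← ENNReal.add_halves (δ / 2)]
  refine (measure_mono fun ω hω => ?_).trans ((measure_union_le _ _).trans (add_le_add
    ((measure_union_le _ _).trans (add_le_add (hl (P n) _ (hP n)) (hl (P n) _ (hP n).reverse)))
    ((measure_union_le _ _).trans (add_le_add (hr (Q n) _ (hQ n)) (hr (Q n) _ (hQ n).reverse)))))
  by_contra hgood
  simp only [Set.mem_union, Set.mem_ofPred_eq, not_or, not_not] at hgood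
  obtain ⟨⟨hleft, hleft'⟩, hright, hright'⟩ := hgood
  refine hω ⟨hleft, hleft', hright, hright'.congr fun j hj => ?_⟩
  rw [show κ n + (n - κ n - 1 - j) = n - 1 - j by omega]

theorem exists_eventually_measure_le_abs_firstArgmax_sub_le (hg : ∀ i, Measurable (g i))
    (hcσ : ∑' i, c i * σ i ≠ ∞) (hN : IsControlledBy N c g) (hC : 0 ≤ C) (hs0 : 0 < s)
    (hs1 : s < 1) {η : ℝ} (hη : 0 < η) (hκ : ∀ᶠ n : ℕ in atTop, η * n ≤ κ n ∧ η * n ≤ n - κ n)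
    (hP : ∀ n, IsDecayingBlock ℙ g σ C s (P n) (κ n) (Z n))
    (hQ : ∀ n, IsDecayingBlock ℙ g σ C s (Q n) (n - κ n) fun j => Z n (κ n + j))
    {r b : ℝ} (hr0 : 0 < r) (hr1 : r ≤ 1) (hb : 0 < b)
    (hPQ : ∀ᶠ n in atTop, b ≤ N ((P n).toSignedMeasure - (Q n).toSignedMeasure))
    {δ : ℝ≥0∞} (hδ : δ ≠ 0) :
    ∃ M : ℕ, ∀ᶠ n in atTop, ℙ {ω | (M : ℝ) ≤ |(firstArgmax n (contrast N r n fun j =>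
      (Measure.dirac (Z n j ω)).toSignedMeasure) : ℝ) - κ n|} ≤ δ := by
  have hηn : Tendsto (fun n : ℕ => η * (n : ℝ)) atTop atTop :=
    tendsto_natCast_atTop_atTop.const_mul_atTop hη
  have hκtop : Tendsto κ atTop atTop := tendsto_natCast_atTop_iff.1
    (tendsto_atTop_mono' _ (hκ.mono fun n h => h.1) hηn)
  have hnκtop : Tendsto (fun n => n - κ n) atTop atTop := tendsto_natCast_atTop_iff.1
    (tendsto_atTop_mono' _ (hκ.mono fun n h => h.2.trans
      (by simpa using Nat.cast_le (α := ℝ).2 (le_tsub_add : n ≤ n - κ n + κ n))) hηn)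
  have hrη : 0 < r * η := mul_pos hr0 hη
  obtain ⟨ε, hε, hgap⟩ : ∃ ε > 0, 2 * ε < r * η * (b - 2 * ε) := by
    refine ⟨r * η * b / (2 * (2 + r * η)), by positivity, ?_⟩
    field_simp
    nlinarith [mul_pos hrη hb]
  obtain ⟨M, hM, h⟩ := exists_eventually_measure_not_hasConcentratedSegments_le hg hcσ hN hC hs0 hs1
    hκtop hnκtop hP hQ hε hr0 hδ
  refine ⟨M, ?_⟩
  filter_upwards [h, hκ, hPQ, hκtop.eventually_ge_atTop M, hnκtop.eventually_ge_atTop M]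
    with n hn hκn hPQn hMκ hMn
  refine (measure_mono fun ω (hfar : (M : ℝ) ≤ _) => ?_).trans hn
  rw [Set.mem_ofPred_eq]
  refine fun hseg => hfar.not_gt ?_
  obtain ⟨hk, hmax⟩ := firstArgmax_spec (by omega : 2 ≤ n)
    (contrast N r n fun j => (Measure.dirac (Z n j ω)).toSignedMeasure)
  obtain ⟨hk1, hkn⟩ := Finset.mem_Ico.1 hk
  exact hseg.abs_argmax_sub_lt hr0 hr1 hM hMκ hMn hη hκn.1 hκn.2 hgap hPQn hk1 hkn
    (hmax _ (Finset.mem_Ico.2 ⟨by omega, by omega⟩))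

theorem isOp_inv_mul_firstArgmax_sub (hg : ∀ i, Measurable (g i)) (hcσ : ∑' i, c i * σ i ≠ ∞)
    (hN : IsControlledBy N c g) (hC : 0 ≤ C) (hs : 0 < s) {θ : ℝ} (hθ0 : 0 < θ) (hθ1 : θ < 1)
    (hP : ∀ n, IsDecayingBlock ℙ g σ C s (P n) ⌊(n : ℝ) * θ⌋₊ (Z n))
    (hQ : ∀ n, IsDecayingBlock ℙ g σ C s (Q n) (n - ⌊(n : ℝ) * θ⌋₊)
      fun j => Z n (⌊(n : ℝ) * θ⌋₊ + j))
    {r b : ℝ} (hr0 : 0 < r) (hr1 : r ≤ 1) (hb : 0 < b)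
    (hPQ : ∀ᶠ n in atTop, b ≤ N ((P n).toSignedMeasure - (Q n).toSignedMeasure)) :
    IsOp ℙ (fun n ω => (n : ℝ)⁻¹ * (firstArgmax n (contrast N r n fun j =>
      (Measure.dirac (Z n j ω)).toSignedMeasure) : ℝ) - θ) fun n => (n : ℝ)⁻¹ :=
  isOp_inv_mul_sub hθ0.le fun _ hδ => exists_eventually_measure_le_abs_firstArgmax_sub_le hg hcσ hN
    hC (lt_min hs one_half_pos) ((min_le_right _ _).trans_lt one_half_lt_one)
    (lt_min (half_pos hθ0) (sub_pos.2 hθ1)) (eventually_mul_le_floor_mul hθ0)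
    (fun n => (hP n).mono hC (min_le_left _ _)) (fun n => (hQ n).mono hC (min_le_left _ _))
    hr0 hr1 hb hPQ hδ

end Rate

section ChangePoint

theorem firstArgmax_seminorm_eq {V : Type*} [AddCommGroup V] [Module ℝ V] (N : Seminorm ℝ V)
    {n : ℕ} {r : ℝ} {D v : ℕ → V}
    (hD : ∀ k, 1 ≤ k → k < n → D k = ((k : ℝ) / n * (1 - (k : ℝ) / n)) ^ r •
      ((k : ℝ)⁻¹ • ∑ i ∈ Finset.Icc 1 k, v i - ((n : ℝ) - k)⁻¹ • ∑ i ∈ Finset.Icc (k + 1) n, v i)) :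
    firstArgmax n (fun k => N (D k)) = firstArgmax n (contrast N r n fun j => v (j + 1)) := by
  refine firstArgmax_congr fun k hk => ?_
  obtain ⟨hk1, hkn⟩ := Finset.mem_Ico.1 hk
  have hkn' : (k : ℝ) / n ≤ 1 := div_le_one_of_le₀ (by exact_mod_cast hkn.le) (Nat.cast_nonneg n)
  have hweight : 0 ≤ ((k : ℝ) / n * (1 - (k : ℝ) / n)) ^ r :=
    Real.rpow_nonneg (mul_nonneg (by positivity) (sub_nonneg.2 hkn')) _
  rw [hD k hk1 hkn, map_smul_eq_mul, Real.norm_of_nonneg hweight, contrast, Finset.range_eq_Ico,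
    Finset.sum_Ico_add' v, Finset.sum_Ico_add' v, zero_add]
  rfl

theorem floor_mul_le_self (n : ℕ) {θ : ℝ} (hθ : θ ≤ 1) : ⌊(n : ℝ) * θ⌋₊ ≤ n :=
  Nat.floor_le_of_le (mul_le_of_le_one_right n.cast_nonneg hθ)

theorem eq_and_eq_of_eq_ite_le_mul {α : Type*} {u : ℕ → α} {p q : α} {n : ℕ} {θ : ℝ} (hθ0 : 0 ≤ θ)
    (hθ1 : θ ≤ 1) (h : ∀ i, 1 ≤ i → i ≤ n → u i = if (i : ℝ) ≤ n * θ then p else q) :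
    (∀ i, 0 < i → i ≤ ⌊(n : ℝ) * θ⌋₊ → u i = p) ∧ ∀ i, ⌊(n : ℝ) * θ⌋₊ < i → i ≤ n → u i = q := by
  constructor <;> intro i hi hin
  · rw [h i hi (hin.trans (floor_mul_le_self n hθ1)),
      if_pos ((Nat.le_floor_iff (by positivity)).1 hin)]
  · rw [h i (by omega) hin, if_neg fun h => hi.not_ge (Nat.le_floor h)]

theorem ofReal_tsum_mul_abs_le {ι : Type*} {d : ι → ℝ} (hd : ∀ i, 0 ≤ d i) (u : ι → ℝ) :
    ENNReal.ofReal (∑' i, d i * |u i|) ≤ ∑' i, ENNReal.ofReal (d i) * ‖u i‖ₑ := by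
  by_cases h : Summable fun i => d i * |u i|
  · rw [ENNReal.ofReal_tsum_of_nonneg (fun i => mul_nonneg (hd i) (abs_nonneg _)) h]
    simp_rw [ENNReal.ofReal_mul (hd _), ← Real.enorm_eq_ofReal_abs, le_refl]
  · simp [tsum_eq_zero_of_not_summable h]

variable {Ω : Type*} [MeasurableSpace Ω] {ℙ : Measure Ω}

theorem eventually_not_of_tendsto_measure_const [IsProbabilityMeasure ℙ] {α : Type*} {l : Filter α}
    {p : α → Prop} (h : Tendsto (fun a => ℙ {_ω | p a}) l (nhds 0)) : ∀ᶠ a in l, ¬ p a := by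
  filter_upwards [h.eventually (gt_mem_nhds one_pos)] with a ha hp
  exact ha.ne (by simp [hp])

theorem sqrt_variance'_le [IsProbabilityMeasure ℙ] {Y : Ω → ℝ} (hY : AEMeasurable Y ℙ) {σ : ℝ≥0}
    (h : ∫⁻ ω, ‖Y ω‖ₑ ^ 2 ∂ℙ ≤ (σ : ℝ≥0∞) ^ 2) : Real.sqrt (variance' ℙ Y) ≤ σ := by
  have hvar : variance' ℙ Y = ProbabilityTheory.variance Y ℙ := by
    simp only [ProbabilityTheory.variance_eq_integral hY, variance', covar, sq]
  refine (Real.sqrt_le_left σ.coe_nonneg).2 ?_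
  rw [hvar]
  exact (ProbabilityTheory.variance_le_expectation_sq hY.aestronglyMeasurable).trans
    (integral_sq_le_of_lintegral_enorm_sq_le hY.aestronglyMeasurable h)

variable {E : Type*} [MeasurableSpace E] {κ : Type*}

theorem abs_covar_regularPart_le (π : κ → Measure E) {f : E → ℝ} {Y Y' : Ω → E} {a : ℝ}
    (ha : 0 ≤ a)
    (h : |covar ℙ (fun ω => f (Y ω)) (fun ω => f (Y' ω))| ≤
      a * Real.sqrt (variance' ℙ fun ω => f (Y ω)) * Real.sqrt (variance' ℙ fun ω => f (Y' ω))) :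
    |covar ℙ (fun ω => regularPart π f (Y ω)) (fun ω => regularPart π f (Y' ω))| ≤
      a * Real.sqrt (variance' ℙ fun ω => regularPart π f (Y ω)) *
        Real.sqrt (variance' ℙ fun ω => regularPart π f (Y' ω)) := by
  by_cases hf : HasBoundedSecondMoments π f
  · rwa [regularPart_eq_self hf]
  · simp only [regularPart_eq_zero hf, covar, Pi.zero_apply, integral_zero, sub_zero, mul_zero,
      abs_zero]
    positivity

theorem isDecayingBlock_of_abs_covar_le [IsProbabilityMeasure ℙ] {ι : Type*} {g : ι → E → ℝ}
    {σ : ι → ℝ≥0} {C s : ℝ} {π : Measure E} {L : ℕ} {Z : ℕ → Ω → E} (hg : ∀ i, Measurable (g i))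
    (hσ : ∀ i, ∫⁻ x, ‖g i x‖ₑ ^ 2 ∂π ≤ (σ i : ℝ≥0∞) ^ 2) (hZ : ∀ j, Measurable (Z j))
    (hmap : ∀ j < L, Measure.map (Z j) ℙ = π) (hC : 0 ≤ C)
    (hcov : ∀ i j m, j + (m + 1) < L →
      |covar ℙ (fun ω => g i (Z j ω)) (fun ω => g i (Z (j + (m + 1)) ω))| ≤
        C * ((m + 1 : ℕ) : ℝ) ^ (-s) * Real.sqrt (variance' ℙ fun ω => g i (Z j ω)) *
          Real.sqrt (variance' ℙ fun ω => g i (Z (j + (m + 1)) ω))) :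
    IsDecayingBlock ℙ g σ C s π L Z where
  measurable := hZ
  map_eq := hmap
  lintegral_sq_le := hσ
  abs_covar_le i j m hjm := by
    have hsqrt : ∀ j < L, Real.sqrt (variance' ℙ fun ω => g i (Z j ω)) ≤ σ i := fun j hj => by
      refine sqrt_variance'_le ((hg i).comp (hZ j)).aemeasurable ((hσ i).trans_eq' ?_)
      rw [← hmap j hj, lintegral_map ((hg i).enorm.pow_const 2) (hZ j)]
      rfl
    refine (hcov i j m hjm).trans ?_
    rw [sq, ← mul_assoc]
    gcongr
    · exact hsqrt j (by omega)
    · exact hsqrt _ hjm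

theorem isDecayingBlock_regularPart [IsProbabilityMeasure ℙ] {ι : Type*} {f : ι → E → ℝ}
    {π : κ → Measure E} {σ : ι → ℝ≥0} {C s : ℝ} {ν : Measure E} {k : κ} {X : ℕ → Ω → E}
    {n a e : ℕ} (hf : ∀ i, Measurable (f i))
    (hσ : ∀ i, HasBoundedSecondMoments π (f i) →
      ∀ k, ∫⁻ x, ‖f i x‖ₑ ^ 2 ∂π k ≤ (σ i : ℝ≥0∞) ^ 2)
    (hX : ∀ i, Measurable (X i)) (hC : 0 ≤ C)
    (hcov : ∀ i j m, 1 ≤ j → 1 ≤ m → j + m ≤ n →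
      |covar ℙ (fun ω => f i (X j ω)) (fun ω => f i (X (j + m) ω))| ≤
        C * (m : ℝ) ^ (-s) * Real.sqrt (variance' ℙ fun ω => f i (X j ω)) *
          Real.sqrt (variance' ℙ fun ω => f i (X (j + m) ω)))
    (hν : ν ≤ π k) (hen : e ≤ n) (hmap : ∀ j, a < j → j ≤ e → Measure.map (X j) ℙ = ν) :
    IsDecayingBlock ℙ (fun i => regularPart π (f i)) σ C s ν (e - a) fun j => X (a + j + 1) := by
  refine isDecayingBlock_of_abs_covar_le (fun i => measurable_regularPart π (hf i))
    (fun i => (lintegral_mono' hν le_rfl).trans (lintegral_regularPart_sq_le hσ i k))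
    (fun j => hX _) (fun j hj => hmap _ (by omega) (by omega)) hC
    fun i j m hjm => abs_covar_regularPart_le π (by positivity) ?_
  have h := hcov i (a + j + 1) (m + 1) (by omega) (by omega) (by omega)
  rwa [show a + j + 1 + (m + 1) = a + (j + (m + 1)) + 1 by omega] at h

end ChangePoint

/-- **Corollary 1**: the `O_p(n⁻¹)` rate for the change-point estimator when the
distance between the two distributions is bounded away from zero (countable family). -/
theorem changePoint_rate_countable_family_nonvanishing
    {Ω : Type*} [MeasurableSpace Ω] (ℙ : Measure Ω) [IsProbabilityMeasure ℙ]
    {E : Type*} [MeasurableSpace E]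
    -- the change point and the exponent of the weight
    (θ γ : ℝ) (hθ0 : 0 < θ) (hθ1 : θ < 1) (hγ0 : 0 ≤ γ) (hγ1 : γ < 1)
    -- the observations and their marginal laws
    (X : ℕ → ℕ → Ω → E) (hXmeas : ∀ n i, Measurable (X n i))
    (P Q : ℕ → Measure E) [∀ n, IsProbabilityMeasure (P n)] [∀ n, IsProbabilityMeasure (Q n)]
    (hlaw : ∀ n i, 1 ≤ i → i ≤ n →
      Measure.map (X n i) ℙ = if (i : ℝ) ≤ (n : ℝ) * θ then P n else Q n)
    -- the seminorm on the space of finite signed measures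
    (N : SignedMeasure E → ℝ)
    (hN_smul : ∀ (a : ℝ) (ν : SignedMeasure E), N (a • ν) = |a| * N ν)
    (hN_add : ∀ ν₁ ν₂ : SignedMeasure E, N (ν₁ + ν₂) ≤ N ν₁ + N ν₂)
    -- the weighted difference of empirical measures `D_k` (for `1 ≤ k < n`)
    (D : ℕ → ℕ → Ω → SignedMeasure E)
    (hD : ∀ n k ω, 1 ≤ k → k < n →
      D n k ω = (((k : ℝ) / n) * (1 - (k : ℝ) / n)) ^ ((1 : ℝ) - γ) •
        ((k : ℝ)⁻¹ • ∑ i ∈ Finset.Icc 1 k, (Measure.dirac (X n i ω)).toSignedMeasure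
          - ((n : ℝ) - k)⁻¹ •
              ∑ i ∈ Finset.Icc (k + 1) n, (Measure.dirac (X n i ω)).toSignedMeasure))
    -- the estimator: `1/n` times the smallest maximizer of `N(D_k)` over `1 ≤ k < n`
    (θhat : ℕ → Ω → ℝ)
    (hθhat : ∀ n ω, θhat n ω = (n : ℝ)⁻¹ *
      ((sInf {k : ℕ | k ∈ Finset.Ico 1 n ∧
        ∀ j ∈ Finset.Ico 1 n, N (D n j ω) ≤ N (D n k ω)} : ℕ) : ℝ))
    -- the countable family `F`, the weights `d(f)` and the norms `‖f‖`
    (F : Set (E → ℝ)) (hFcount : F.Countable) (hFmeas : ∀ f ∈ F, Measurable f)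
    (normF : (E → ℝ) → ℝ)
    (hnormF : ∀ f : E → ℝ, normF f =
      ⨆ n : ℕ, Real.sqrt ((∫ x, f x ^ 2 ∂(P n)) + ∫ x, f x ^ 2 ∂(Q n)))
    (d : (E → ℝ) → ℝ) (hd : ∀ f ∈ F, 0 < d f)
    (hdsum : Summable fun f : F => d f * normF f)
    -- condition (2.9): the seminorm is dominated by the weighted moments
    (hNle : ∀ ν : SignedMeasure E, N ν ≤ ∑' f : F, d f * |sIntegral ν f|)
    -- Assumption 1: algebraic decay of correlations, uniformly over `F`
    (C ρ : ℝ) (hC : 0 < C) (hρ : 0 < ρ)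
    (hA1 : ∀ f ∈ F, ∀ n i m : ℕ, 1 ≤ i → 1 ≤ m → i + m ≤ n →
      |covar ℙ (fun ω => f (X n i ω)) (fun ω => f (X n (i + m) ω))| ≤
        C * (m : ℝ) ^ (-ρ) *
          Real.sqrt (variance' ℙ fun ω => f (X n i ω)) *
          Real.sqrt (variance' ℙ fun ω => f (X n (i + m) ω)))
    -- condition (2.10) with a constant lower bound `b > 0`
    (b : ℝ) (hb : 0 < b)
    (h210 : Tendsto (fun n =>
      ℙ {ω | N ((P n).toSignedMeasure - (Q n).toSignedMeasure) ≤ b}) atTop (nhds 0)) :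
    -- conclusion (2.13): `θ̂_n − θ = O_p(n⁻¹)`
    IsOp ℙ (fun n ω => θhat n ω - θ) (fun n => (n : ℝ)⁻¹) := by
  have : Countable F := hFcount
  let N' : Seminorm ℝ (SignedMeasure E) := Seminorm.of N hN_add hN_smul
  have hf : ∀ f : F, Measurable (f : E → ℝ) := fun f => hFmeas f f.2
  have hd0 : ∀ f : F, 0 ≤ d f := fun f => (hd f f.2).le
  have hcσ : ∑' f : F, ENNReal.ofReal (d f) * (normF f).toNNReal ≠ ∞ :=
    (tsum_congr fun f => ENNReal.ofReal_mul (hd0 f)) ▸ hdsum.tsum_ofReal_ne_top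
  have hσ : ∀ f : F, HasBoundedSecondMoments (fun n => P n + Q n) (f : E → ℝ) →
      ∀ n, ∫⁻ x, ‖(f : E → ℝ) x‖ₑ ^ 2 ∂(P n + Q n) ≤ ((normF f).toNNReal : ℝ≥0∞) ^ 2 :=
    fun f h n => hnormF f ▸ lintegral_enorm_sq_le_iSup_sqrt (hf f) h n
  have hN : IsControlledBy N' (fun f : F => ENNReal.ofReal (d f))
      fun f => regularPart (fun n => P n + Q n) f :=
    isControlledBy_regularPart (m := 2) (fun f => (ENNReal.ofReal_pos.2 (hd f f.2)).ne')
      (fun ν => (ENNReal.ofReal_le_ofReal (hNle ν)).trans (ofReal_tsum_mul_abs_le hd0 _))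
      hf (fun n => by simp [one_add_one_eq_two]) hcσ hσ
  have hblock := fun (n a e : ℕ) (ν : Measure E) => isDecayingBlock_regularPart (k := n) (ν := ν)
    (a := a) (e := e) hf hσ (hXmeas n) hC.le fun f => hA1 f f.2 n
  have hsplit := fun n => eq_and_eq_of_eq_ite_le_mul hθ0.le hθ1.le (hlaw n)
  have hest : ∀ n ω, θhat n ω = (n : ℝ)⁻¹ * (firstArgmax n (contrast N' (1 - γ) n fun j =>
      (Measure.dirac (X n (j + 1) ω)).toSignedMeasure) : ℝ) := fun n ω => by
    rw [hθhat, ← firstArgmax_seminorm_eq N' (D := (D n · ω))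
      (v := fun i => (Measure.dirac (X n i ω)).toSignedMeasure) fun k => hD n k ω]
    rfl
  simp_rw [hest]
  refine isOp_inv_mul_firstArgmax_sub (fun f : F => measurable_regularPart _ (hf f)) hcσ hN hC.le
    hρ hθ0 hθ1 (Z := fun n j => X n (j + 1)) (fun n => ?_)
    (fun n => hblock n _ n _ (Measure.le_add_left le_rfl) le_rfl (hsplit n).2)
    (sub_pos.2 hγ1) (sub_le_self 1 hγ0) hb
    ((eventually_not_of_tendsto_measure_const h210).mono fun n => le_of_not_ge)
  simpa using
    hblock n 0 _ _ (Measure.le_add_right le_rfl) (floor_mul_le_self n hθ1.le) (hsplit n).1
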